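/- arXiv:2403.17952 — 6 statements merged into one kernel-verified Lean document; each statement's English description precedes it below -/
import Mathlib

section
/- Let m ≥ 0 be an integer, r ≥ 2 an integer, and y ∈ (0,1) a real number. Then ζ*(m+2, {1}_{r−1}) = Li*_{{1}_{m+r+1}}(y, {1}_m, y^{−1}, {1}_{r−1}) − Li*_{{1}_{m+r+1}}(y, {1}_m, y^{−1}, {1}_{r−2}, y), where the argument lists mean: the first variable is y, the next m variables are 1, the next variable is y^{−1}, and the remaining r−1 variables are all 1 (respectively, r−2 ones followed by a final y). -/
/-!
Split each tuple on the right at the index `n = n_{m+2}` carrying `y⁻¹`. The difference of the two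
multiple polylogarithms becomes `S(y) = ∑ₙ A(n) B(n) / n`, where `A(n)` is the sum of
`y ^ (n₁ - n) / (n₁ ⋯ n_{m+1})` over `n₁ ≥ ⋯ ≥ n_{m+1} ≥ n` and `B(n)` is the sum of
`(1 - y ^ j_s) / (j₁ ⋯ j_s)` over `n ≥ j₁ ≥ ⋯ ≥ j_s ≥ 1`, with `s = r - 1`. At `y = 0` only
`n₁ = ⋯ = n_{m+1} = n` contributes to `A(n)`, so `S(0) = ζ*(m+2, {1}_{r-1})`; it remains to see that
`S` is constant.

Writing `A⁻` and `B⁻` for the sums with one summation variable fewer, one has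
`y (1 - y) dA(n)/dy = A⁻(n) - n (1 - y) A(n)` and `(1 - y) dB(n)/dy = -B⁻(n)`. Together with
`A⁻(n) / n = A(n) - y A(n + 1)` and `B⁻(n) / n = B(n) - B(n - 1)` they give
`(1 - y) dS/dy = ∑ₙ (A(n) B(n - 1) - A(n + 1) B(n))`, which telescopes to `0`.

To differentiate only polynomials, all summation variables are truncated at `M`. The differential
equation of `A` then has an additional term (`outerSum_deriv`), which contributes to the derivative
of the truncated `S` (`pairing_deriv`) an amount `O(M⁻¹ (log M) ^ (m + s))`, uniformly on `[0, y]`;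
the mean value theorem concludes (`pairing_tendsto`). Truncated sums over tuples are turned into
iterated sums by `starSum_eq_pairing` and `starSum_eq_pairing_zero`, and `tsum_of_bounded` passes to
the limit.
-/

open scoped BigOperators

/-- Generalized harmonic number `H_n^{(k)} = Σ_{j=1}^n 1/j^k`. -/
noncomputable def genH (n k : ℕ) : ℝ := ∑ j ∈ Finset.Icc 1 n, 1 / (j : ℝ) ^ k

/-- Unsigned Stirling numbers of the first kind. -/
def stirling1 : ℕ → ℕ → ℕ
  | 0, 0 => 1
  | 0, _ + 1 => 0
  | _ + 1, 0 => 0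
  | n + 1, k + 1 => stirling1 n k + n * stirling1 n (k + 1)

/-- Complete exponential Bell polynomials (`x` indexed from 1). -/
noncomputable def bellY (x : ℕ → ℝ) : ℕ → ℝ
  | 0 => 1
  | m + 1 =>
    ∑ j ∈ (Finset.range (m + 1)).attach,
      (Nat.choose m j.1 : ℝ) * x (m + 1 - j.1) * bellY x j.1
decreasing_by
  have := Finset.mem_range.mp j.2
  omega

/-- Bell number `Y_k(n) = Y_k(H_n, 1!H_n^{(2)}, ..., (k-1)!H_n^{(k)})`. -/
noncomputable def bellNum (k n : ℕ) : ℝ :=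
  bellY (fun i => (Nat.factorial (i - 1) : ℝ) * genH n i) k

/-- Multiple harmonic-type sum `ζ*_n(k₁,...,k_r; z)`. -/
noncomputable def zstarZ (z : ℝ) : ℕ → List ℕ → ℝ
  | _, [] => 1
  | n, [k] => ∑ m ∈ Finset.Icc 1 n, z ^ m / (m : ℝ) ^ k
  | n, k :: ks => ∑ m ∈ Finset.Icc 1 n, (1 / (m : ℝ) ^ k) * zstarZ z m ks

/-- Multiple harmonic star sum `ζ*_n(k₁,...,k_r)`. -/
noncomputable def zstar (n : ℕ) (ks : List ℕ) : ℝ := zstarZ 1 n ks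

/-- Multiple harmonic sum (strict) `ζ_n(k₁,...,k_r)`. -/
noncomputable def zmhs : ℕ → List ℕ → ℝ
  | _, [] => 1
  | n, k :: ks => ∑ m ∈ Finset.Icc 1 n, (1 / (m : ℝ) ^ k) * zmhs (m - 1) ks

/-- Weakly decreasing tuples `n ≥ f 0 ≥ f 1 ≥ ... ≥ f (r-1) ≥ 1`. -/
def decT (n r : ℕ) : Finset (Fin r → ℕ) :=
  (Fintype.piFinset fun _ => Finset.Icc 1 n).filter fun f =>
    (∀ i : Fin r, 1 ≤ f i ∧ f i ≤ n) ∧ ∀ i j : Fin r, i ≤ j → f j ≤ f i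

/-- `m`-fold iterated integral of `f t_m / (t_1 ⋯ t_m)` over `z > t_1 > ⋯ > t_m > 0`. -/
noncomputable def iterInt (f : ℝ → ℝ) : ℕ → ℝ → ℝ
  | 0, z => f z
  | m + 1, z => ∫ t in (0:ℝ)..z, iterInt f m t / t

open Finset

/-! ### Inner and outer nested sums -/

/-- The `s`-fold nested sum `∑_{n ≥ j₁ ≥ ⋯ ≥ j_s ≥ 1} w j_s / (j₁ ⋯ j_s)`, equal to `w n` for
`s = 0`. -/
noncomputable def innerSum (w : ℕ → ℝ) : ℕ → ℕ → ℝ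
  | 0, n => w n
  | s + 1, n => ∑ j ∈ Icc 1 n, innerSum w s j / (j : ℝ)

/-- The truncated `m`-fold nested sum
`∑_{M ≥ n₁ ≥ ⋯ ≥ n_m ≥ n} y ^ (n₁ - n) / (n₁ ⋯ n_m)`, equal to `1` for `m = 0`. The differences
`k - n` of the recursion never truncate since `n ≤ k`; writing the weight this way makes the sum a
polynomial in `y`, so that it can be evaluated at `y = 0`. -/
noncomputable def outerSum (y : ℝ) (M : ℕ) : ℕ → ℕ → ℝ
  | 0, _ => 1
  | m + 1, n => ∑ k ∈ Icc n M, y ^ (k - n) * outerSum y M m k / (k : ℝ)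

lemma outerSum_top (y : ℝ) (M m : ℕ) : outerSum y M (m + 1) (M + 1) = 0 := by
  simp [outerSum]

lemma outerSum_step (y : ℝ) (M m n : ℕ) (hn : n ≤ M) :
    outerSum y M (m + 1) n = outerSum y M m n / n + y * outerSum y M (m + 1) (n + 1) := by
  have h1 : Icc n M = insert n (Icc (n + 1) M) := by
    ext k; simp only [mem_Icc, mem_insert]; omega
  rw [outerSum, h1, sum_insert (by simp), outerSum, mul_sum]
  congr 1
  · simp
  · refine sum_congr rfl fun k hk => ?_
    have hk := mem_Icc.mp hk
    rw [show k - n = (k - (n + 1)) + 1 by omega, pow_succ]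
    ring

lemma innerSum_zero (w : ℕ → ℝ) (hw : w 0 = 0) (s : ℕ) : innerSum w s 0 = 0 := by
  cases s <;> simp [innerSum, hw]

lemma innerSum_step (w : ℕ → ℝ) (s n : ℕ) :
    innerSum w (s + 1) (n + 1)
      = innerSum w (s + 1) n + innerSum w s (n + 1) / ((n : ℝ) + 1) := by
  rw [innerSum, sum_Icc_succ_top (by omega), innerSum]
  push_cast
  rfl

lemma innerSum_nonneg (w : ℕ → ℝ) (hw : ∀ n, 0 ≤ w n) (s n : ℕ) : 0 ≤ innerSum w s n := by
  induction s generalizing n with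
  | zero => exact hw n
  | succ s ih => exact sum_nonneg fun j _ => div_nonneg (ih j) (by positivity)

lemma innerSum_mono {w v : ℕ → ℝ} (h : ∀ n, w n ≤ v n) (s n : ℕ) :
    innerSum w s n ≤ innerSum v s n := by
  induction s generalizing n with
  | zero => exact h n
  | succ s ih =>
    exact sum_le_sum fun j _ => div_le_div_of_nonneg_right (ih j) (by positivity)

lemma innerSum_sub (w v : ℕ → ℝ) (s n : ℕ) :
    innerSum (fun k => w k - v k) s n = innerSum w s n - innerSum v s n := by
  induction s generalizing n with
  | zero => rfl
  | succ s ih => simp only [innerSum, ih, sub_div, sum_sub_distrib]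

lemma outerSum_nonneg {y : ℝ} (hy : 0 ≤ y) (M m n : ℕ) : 0 ≤ outerSum y M m n := by
  induction m generalizing n with
  | zero => exact zero_le_one
  | succ m ih =>
    exact sum_nonneg fun j _ => div_nonneg (mul_nonneg (by positivity) (ih j)) (by positivity)

/-! ### Derivatives in `y` -/

/-- Differential equation of `outerSum` in `y`, multiplied by `y (1 - y)`. The term with
`y ^ (M + 1 - n)` is caused by the truncation at `M`. -/
lemma outerSum_deriv (M m n : ℕ) (hn1 : 1 ≤ n) (hn : n ≤ M + 1) (y : ℝ) :
    ∃ D, HasDerivAt (fun t => outerSum t M (m + 1) n) D y ∧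
      y * (1 - y) * D = outerSum y M m n - y ^ (M + 1 - n) * outerSum 1 M m n
        - n * (1 - y) * outerSum y M (m + 1) n := by
  -- Downward induction on `n = M + 1 - i` inside an induction on `m`, along `outerSum_step`.
  have key : ∀ m i n, 1 ≤ n → n + i = M + 1 → ∃ D,
      HasDerivAt (fun t => outerSum t M (m + 1) n) D y ∧
      y * (1 - y) * D = outerSum y M m n - y ^ (M + 1 - n) * outerSum 1 M m n
        - n * (1 - y) * outerSum y M (m + 1) n := by
    intro m
    induction m with
    | zero =>
      intro i
      induction i with
      | zero =>
        intro n _ h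
        obtain rfl : n = M + 1 := by omega
        simp only [outerSum_top]
        exact ⟨0, hasDerivAt_const _ _, by simp [outerSum]⟩
      | succ i ih =>
        intro n h0 h
        obtain ⟨D, hD, e⟩ := ih (n + 1) (by omega) (by omega)
        have hne : (n : ℝ) ≠ 0 := by positivity
        refine ⟨1 * outerSum y M (0 + 1) (n + 1) + y * D, ?_, ?_⟩
        · have hf : (fun t => outerSum t M (0 + 1) n)
              = fun t => 1 / (n : ℝ) + t * outerSum t M (0 + 1) (n + 1) := by
            funext t; rw [outerSum_step _ _ _ _ (by omega)]; rfl
          rw [hf]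
          exact ((hasDerivAt_id y).mul hD).const_add _
        · rw [outerSum_step y M 0 n (by omega)]
          rw [show M + 1 - n = (M - n) + 1 by omega, pow_succ]
          have hz : ∀ t k, outerSum t M 0 k = 1 := fun _ _ => rfl
          rw [Nat.add_sub_add_right] at e
          simp only [hz] at e ⊢
          push_cast at e
          field_simp
          linear_combination y * e
    | succ m ihm =>
      intro i
      induction i with
      | zero =>
        intro n _ h
        obtain rfl : n = M + 1 := by omega
        simp only [outerSum_top]
        exact ⟨0, hasDerivAt_const _ _, by simp⟩
      | succ i ih =>
        intro n h0 h
        obtain ⟨D, hD, e⟩ := ih (n + 1) (by omega) (by omega)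
        obtain ⟨D', hD', e'⟩ := ihm (i + 1) n h0 h
        have hne : (n : ℝ) ≠ 0 := by positivity
        refine ⟨D' / n + (1 * outerSum y M (m + 1 + 1) (n + 1) + y * D), ?_, ?_⟩
        · have hf : (fun t => outerSum t M (m + 1 + 1) n)
              = fun t => outerSum t M (m + 1) n / (n : ℝ)
                  + t * outerSum t M (m + 1 + 1) (n + 1) := by
            funext t; rw [outerSum_step _ _ _ _ (by omega)]
          rw [hf]
          exact (hD'.div_const _).add ((hasDerivAt_id y).mul hD)
        · have e1 := outerSum_step y M (m + 1) n (by omega)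
          have e2 := outerSum_step y M m n (by omega)
          have e3 := outerSum_step 1 M m n (by omega)
          rw [show M + 1 - n = (M - n) + 1 by omega, pow_succ] at e' ⊢
          rw [Nat.add_sub_add_right] at e
          push_cast at e
          rw [e1, mul_add, mul_div_assoc', e']
          rw [e3]
          field_simp at e2 ⊢
          linear_combination n * y * e - (1 : ℝ) * e2
  exact key m (M + 1 - n) n hn1 (by omega)

/-- For `w k = 1 - y ^ k`, differentiation in `y` removes one inner summation, because
`∑_{j = 1}^{n} y ^ (j - 1) = (1 - y ^ n) / (1 - y)`. -/
lemma innerSum_deriv (s n : ℕ) (y : ℝ) :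
    ∃ D, HasDerivAt (fun t : ℝ => innerSum (fun k => 1 - t ^ k) (s + 1) n) D y ∧
      (1 - y) * D = - innerSum (fun k => 1 - y ^ k) s n := by
  induction s generalizing n with
  | zero =>
    induction n with
    | zero => exact ⟨0, by simpa [innerSum] using hasDerivAt_const y (0 : ℝ), by simp [innerSum]⟩
    | succ n ih =>
      obtain ⟨D, hD, e⟩ := ih
      have hne : (n : ℝ) + 1 ≠ 0 := by positivity
      refine ⟨D + (- (((n + 1 : ℕ) : ℝ) * y ^ n)) / ((n : ℝ) + 1), ?_, ?_⟩
      · simp only [innerSum_step]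
        refine hD.add (HasDerivAt.div_const ?_ _)
        simpa [innerSum] using (hasDerivAt_pow (n + 1) y).const_sub 1
      · simp only [innerSum] at e ⊢
        push_cast
        field_simp
        linear_combination e
  | succ s ihs =>
    induction n with
    | zero => exact ⟨0, by simpa [innerSum] using hasDerivAt_const y (0 : ℝ), by simp [innerSum]⟩
    | succ n ih =>
      obtain ⟨D, hD, e⟩ := ih
      obtain ⟨D', hD', e'⟩ := ihs (n + 1)
      have hne : (n : ℝ) + 1 ≠ 0 := by positivity
      refine ⟨D + D' / ((n : ℝ) + 1), ?_, ?_⟩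
      · simp only [innerSum_step _ (s + 1)]
        exact hD.add (hD'.div_const _)
      · rw [innerSum_step, mul_add, e, mul_div_assoc', e']
        ring

/-- The derivative in `y` of the truncated difference of multiple polylogarithms: apart from the
truncation term of `outerSum_deriv`, the summands telescope to zero. -/
lemma pairing_deriv (M m s : ℕ) (y : ℝ) (hy0 : 0 < y) (hy1 : y < 1) :
    HasDerivAt (fun t : ℝ => ∑ n ∈ Icc 1 M,
        outerSum t M (m + 1) n * innerSum (fun k => 1 - t ^ k) (s + 1) n / (n : ℝ))
      (-(∑ n ∈ Icc 1 M, y ^ (M - n) / (n : ℝ) *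
        (outerSum 1 M m n * innerSum (fun k => 1 - y ^ k) (s + 1) n)) / (1 - y)) y := by
  have hA : ∀ n, ∃ D, n ∈ Icc 1 M → HasDerivAt (fun t => outerSum t M (m + 1) n) D y ∧
      y * (1 - y) * D = outerSum y M m n - y ^ (M + 1 - n) * outerSum 1 M m n
        - n * (1 - y) * outerSum y M (m + 1) n := by
    intro n
    by_cases h : n ∈ Icc 1 M
    · have h' := mem_Icc.mp h
      obtain ⟨D, hD⟩ := outerSum_deriv M m n (by omega) (by omega) y
      exact ⟨D, fun _ => hD⟩
    · exact ⟨0, fun h' => absurd h' h⟩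
  choose DA hDA using hA
  choose DB hDB eB using fun n => innerSum_deriv s n y
  have hd := HasDerivAt.fun_sum (u := Icc 1 M) (fun n hn => ((hDA n hn).1.mul (hDB n)).div_const (n : ℝ))
  refine hd.congr_deriv ?_
  have h1y : 1 - y ≠ 0 := by linarith
  rw [eq_div_iff h1y]
  refine mul_left_cancel₀ hy0.ne' ?_
  set B := fun s n => innerSum (fun k => 1 - y ^ k) s n with hB
  set F := fun n => outerSum y M (m + 1) (n + 1) * B (s + 1) n with hF
  -- `outerSum` vanishes at `M + 1` and `innerSum` at `0`, so the telescoping sum has no boundary.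
  have tel : ∑ n ∈ Icc 1 M, (F n - F (n - 1)) = 0 := by
    have : ∀ N, ∑ n ∈ Icc 1 N, (F n - F (n - 1)) = F N - F 0 := by
      intro N
      induction N with
      | zero => simp
      | succ N ih => rw [sum_Icc_succ_top (by omega), ih]; simp
    rw [this]
    simp only [hF, outerSum_top, hB]
    rw [innerSum_zero _ (by simp)]
    simp
  have : y * ((∑ n ∈ Icc 1 M, (DA n * B (s + 1) n + outerSum y M (m + 1) n * DB n) / (n : ℝ)) * (1 - y))
      - y * -(∑ n ∈ Icc 1 M, y ^ (M - n) / (n : ℝ) * (outerSum 1 M m n * B (s + 1) n))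
      = -y * ∑ n ∈ Icc 1 M, (F n - F (n - 1)) := by
    simp only [mul_sum, sum_mul, ← sum_neg_distrib, ← sum_sub_distrib]
    refine sum_congr rfl fun n hn => ?_
    have hn' := mem_Icc.mp hn
    obtain ⟨n, rfl⟩ : ∃ k, n = k + 1 := ⟨n - 1, by omega⟩
    have e1 := (hDA _ hn).2
    have e2 := eB (n + 1)
    have e3 := outerSum_step y M m (n + 1) (by omega)
    have e4 := innerSum_step (fun k => 1 - y ^ k) s n
    rw [show M + 1 - (n + 1) = (M - (n + 1)) + 1 by omega, pow_succ] at e1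
    simp only [hF, hB, Nat.add_sub_cancel]
    have hne : (n : ℝ) + 1 ≠ 0 := by positivity
    push_cast at e1 e3 ⊢
    simp only [div_eq_mul_inv] at e3 e4 ⊢
    have hq : ((n : ℝ) + 1)⁻¹ * ((n : ℝ) + 1) = 1 := inv_mul_cancel₀ hne
    generalize ((n : ℝ) + 1)⁻¹ = q at *
    generalize innerSum (fun k => 1 - y ^ k) (s + 1) (n + 1) = b1 at *
    generalize innerSum (fun k => 1 - y ^ k) (s + 1) n = b0 at *
    generalize innerSum (fun k => 1 - y ^ k) s (n + 1) = c at *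
    linear_combination b1 * q * e1 + y * outerSum y M (m + 1) (n + 1) * q * e2
      - (1 - y) * outerSum y M (m + 1) (n + 1) * b1 * hq - b1 * e3
      + y * outerSum y M (m + 1) (n + 1) * e4
  rw [tel, mul_zero, sub_eq_zero] at this
  exact this

/-! ### Harmonic number estimates -/

/-- The harmonic number `1 + 1/2 + ⋯ + 1/n` as a real number. -/
noncomputable def harm (n : ℕ) : ℝ := ∑ k ∈ Icc 1 n, 1 / (k : ℝ)

lemma harm_nonneg (n : ℕ) : 0 ≤ harm n := sum_nonneg fun _ _ => by positivity

lemma harm_mono {a b : ℕ} (h : a ≤ b) : harm a ≤ harm b :=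
  sum_le_sum_of_subset_of_nonneg (Icc_subset_Icc_right h) fun _ _ _ => by positivity

lemma harm_pow_le (p : ℕ) : ∃ C : ℝ, 0 ≤ C ∧ ∀ n : ℕ, 1 ≤ n → harm n ^ p ≤ C * (n : ℝ) ^ (1 / 2 : ℝ) := by
  -- `log n ≤ n ^ ε / ε` with `ε p ≤ 1 / 2`.
  set ε : ℝ := 1 / (2 * (p + 1)) with hε
  have hε0 : 0 < ε := by positivity
  refine ⟨(1 + 1 / ε) ^ p, by positivity, fun n hn => ?_⟩
  have hn1 : (1 : ℝ) ≤ n := by exact_mod_cast hn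
  have h1 : harm n ≤ 1 + Real.log n := by
    have := harmonic_le_one_add_log n
    rw [harmonic_eq_sum_Icc] at this
    push_cast at this
    simpa [harm] using this
  have h2 : Real.log n ≤ (n : ℝ) ^ ε / ε := Real.log_le_rpow_div (by positivity) hε0
  have h3 : 1 ≤ (n : ℝ) ^ ε := Real.one_le_rpow hn1 hε0.le
  have h4 : harm n ≤ (1 + 1 / ε) * (n : ℝ) ^ ε := by
    rw [div_eq_mul_one_div] at h2
    linarith
  calc harm n ^ p ≤ ((1 + 1 / ε) * (n : ℝ) ^ ε) ^ p := pow_le_pow_left₀ (harm_nonneg n) h4 p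
    _ = (1 + 1 / ε) ^ p * (n : ℝ) ^ (ε * p) := by
      rw [mul_pow, ← Real.rpow_mul_natCast (by positivity)]
    _ ≤ _ := by
      refine mul_le_mul_of_nonneg_left (Real.rpow_le_rpow_of_exponent_le hn1 ?_) (by positivity)
      rw [hε, div_mul_eq_mul_div, div_le_div_iff₀ (by positivity) (by positivity)]
      linarith

lemma innerSum_le_harm (s n : ℕ) : innerSum (fun _ => 1) s n ≤ harm n ^ s := by
  induction s generalizing n with
  | zero => simp [innerSum]
  | succ s ih =>
    rw [innerSum, pow_succ, harm, mul_sum]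
    refine sum_le_sum fun j hj => ?_
    rw [mul_one_div]
    refine div_le_div_of_nonneg_right ((ih j).trans ?_) (by positivity)
    exact pow_le_pow_left₀ (harm_nonneg j) (harm_mono (mem_Icc.mp hj).2) s

lemma outerSum_one_le_harm (M m n : ℕ) (hn : 1 ≤ n) : outerSum 1 M m n ≤ harm M ^ m := by
  induction m generalizing n with
  | zero => simp [outerSum]
  | succ m ih =>
    rw [outerSum, pow_succ]
    calc ∑ k ∈ Icc n M, 1 ^ (k - n) * outerSum 1 M m k / (k : ℝ)
        ≤ ∑ k ∈ Icc n M, harm M ^ m * (1 / (k : ℝ)) := by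
          refine sum_le_sum fun k hk => ?_
          rw [one_pow, one_mul, mul_one_div]
          exact div_le_div_of_nonneg_right (ih k (hn.trans (mem_Icc.mp hk).1)) (by positivity)
      _ ≤ ∑ k ∈ Icc 1 M, harm M ^ m * (1 / (k : ℝ)) :=
          sum_le_sum_of_subset_of_nonneg (Icc_subset_Icc_left hn) fun k _ _ =>
            mul_nonneg (pow_nonneg (harm_nonneg M) m) (by positivity)
      _ = _ := by rw [← mul_sum]; rfl

lemma geom_Icc_le {y : ℝ} (hy0 : 0 ≤ y) (hy1 : y < 1) (n M : ℕ) :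
    ∑ k ∈ Icc n M, y ^ (k - n) ≤ 1 / (1 - y) := by
  rw [one_div, ← tsum_geometric_of_lt_one hy0 hy1]
  have : ∑ k ∈ Icc n M, y ^ (k - n) = ∑ i ∈ (Icc n M).image (· - n), y ^ i := by
    rw [sum_image]
    intro a ha b hb h
    have ha := mem_Icc.mp ha
    have hb := mem_Icc.mp hb
    simp only at h
    omega
  rw [this]
  exact (summable_geometric_of_lt_one hy0 hy1).sum_le_tsum _ fun i _ => by positivity

/-- A bound on `outerSum` uniform in the inner index gains a factor `1 / n` at the next step. -/
lemma outerSum_succ_le_aux {y c : ℝ} (hy0 : 0 ≤ y) (hy1 : y < 1) (M m n : ℕ) (hn : 1 ≤ n)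
    (h : ∀ k, 1 ≤ k → outerSum y M m k ≤ c) (hc : 0 ≤ c) :
    outerSum y M (m + 1) n ≤ c * (1 / (1 - y)) / n := by
  have hn0 : (0 : ℝ) < n := by exact_mod_cast hn
  calc outerSum y M (m + 1) n ≤ ∑ k ∈ Icc n M, c / n * y ^ (k - n) := by
        refine sum_le_sum fun k hk => ?_
        have hk := (mem_Icc.mp hk).1
        have hk' : (n : ℝ) ≤ k := by exact_mod_cast hk
        rw [mul_div_assoc, mul_comm]
        refine mul_le_mul_of_nonneg_right ?_ (by positivity)
        exact div_le_div₀ hc (h k (hn.trans hk)) hn0 hk'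
    _ ≤ c / n * (1 / (1 - y)) := by
        rw [← mul_sum]
        exact mul_le_mul_of_nonneg_left (geom_Icc_le hy0 hy1 n M) (by positivity)
    _ = _ := by ring

lemma outerSum_le {y : ℝ} (hy0 : 0 ≤ y) (hy1 : y < 1) (M m n : ℕ) (hn : 1 ≤ n) :
    outerSum y M m n ≤ (1 / (1 - y)) ^ m := by
  have h1y : 0 < 1 - y := by linarith
  induction m generalizing n with
  | zero => simp [outerSum]
  | succ m ih =>
    have hn1 : (1 : ℝ) ≤ n := by exact_mod_cast hn
    refine (outerSum_succ_le_aux hy0 hy1 M m n hn ih (by positivity)).trans ?_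
    rw [pow_succ]
    exact div_le_self (by positivity) hn1

/-- Uniform boundedness of the truncated sums, which gives the convergence of all three series of
the theorem: the summands are `O(n ^ (-3 / 2))`. -/
lemma pairing_bounded (m s : ℕ) {y : ℝ} (hy0 : 0 ≤ y) (hy1 : y < 1) :
    ∃ K : ℝ, ∀ M : ℕ,
      ∑ n ∈ Icc 1 M, outerSum y M (m + 1) n * innerSum (fun _ => 1) s n / (n : ℝ) ≤ K := by
  have h1y : 0 < 1 - y := by linarith
  obtain ⟨C, hC, hH⟩ := harm_pow_le s
  have hs : Summable fun n : ℕ => (1 / (1 - y)) ^ m * (1 / (1 - y)) * C * ((n : ℝ) ^ (3 / 2 : ℝ))⁻¹ :=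
    (Real.summable_nat_rpow_inv.mpr (by norm_num)).mul_left _
  refine ⟨_, fun M => le_trans (sum_le_sum fun n hn => ?_)
    (hs.sum_le_tsum (Icc 1 M) fun n _ => by positivity)⟩
  have hn := (mem_Icc.mp hn).1
  have hn0 : (0 : ℝ) < n := by exact_mod_cast hn
  have e1 := outerSum_succ_le_aux hy0 hy1 M m n hn (fun k hk => outerSum_le hy0 hy1 M m k hk)
    (by positivity)
  have e2 := (innerSum_le_harm s n).trans (hH n hn)
  have e3 : (n : ℝ) ^ (3 / 2 : ℝ) * (n : ℝ) ^ (1 / 2 : ℝ) = n * n := by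
    rw [← Real.rpow_add hn0]; norm_num [sq]
  calc outerSum y M (m + 1) n * innerSum (fun _ => 1) s n / (n : ℝ)
      ≤ ((1 / (1 - y)) ^ m * (1 / (1 - y)) / n) * (C * (n : ℝ) ^ (1 / 2 : ℝ)) / n := by
        refine div_le_div_of_nonneg_right ?_ hn0.le
        exact mul_le_mul e1 e2 (innerSum_nonneg _ (fun _ => zero_le_one) _ _) (by positivity)
    _ = _ := by
        have : (n : ℝ) ^ (3 / 2 : ℝ) ≠ 0 := by positivity
        field_simp
        linear_combination C * e3

/-- The truncation term is `O(1 / M)` up to logarithms: `1 / n ≤ (M - n + 1) / M` for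
`1 ≤ n ≤ M`, and `∑ (j + 1) y ^ j` converges. -/
lemma geom_harm_le {y : ℝ} (hy0 : 0 ≤ y) (hy1 : y < 1) :
    ∃ K : ℝ, 0 ≤ K ∧ ∀ M : ℕ, ∑ n ∈ Icc 1 M, y ^ (M - n) / (n : ℝ) ≤ K / M := by
  have hs : Summable fun j : ℕ => ((j : ℝ) + 1) * y ^ j := by
    have h1 := summable_pow_mul_geometric_of_norm_lt_one (R := ℝ) 1
      (r := y) (by rwa [Real.norm_of_nonneg hy0])
    have h2 := summable_geometric_of_lt_one hy0 hy1
    refine (h1.add h2).congr fun j => ?_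
    simp [add_mul]
  refine ⟨∑' j : ℕ, ((j : ℝ) + 1) * y ^ j, tsum_nonneg fun j => by positivity, fun M => ?_⟩
  rcases Nat.eq_zero_or_pos M with rfl | hM
  · simp
  have hM0 : (0 : ℝ) < M := by exact_mod_cast hM
  rw [le_div_iff₀ hM0, sum_mul]
  refine le_trans ?_ (hs.sum_le_tsum ((Icc 1 M).image (M - ·)) fun n _ => by positivity)
  rw [sum_image]
  · refine sum_le_sum fun n hn => ?_
    have hn := mem_Icc.mp hn
    obtain ⟨j, rfl⟩ := Nat.exists_eq_add_of_le hn.2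
    have hn0 : (1 : ℝ) ≤ n := by exact_mod_cast hn.1
    rw [Nat.add_sub_cancel_left, div_mul_eq_mul_div, mul_comm ((j : ℝ) + 1), mul_div_assoc]
    refine mul_le_mul_of_nonneg_left ?_ (by positivity)
    -- `n + j ≤ n (j + 1)` because `n ≥ 1`.
    rw [div_le_iff₀ (by linarith)]
    push_cast
    nlinarith [Nat.cast_nonneg (α := ℝ) j]
  · intro a ha b hb h
    have ha := mem_Icc.mp ha
    have hb := mem_Icc.mp hb
    simp only at h
    omega

/-! ### Independence of `y` in the limit -/

/-- The truncated difference of multiple polylogarithms at `y` and its value at `0` have the same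
limit: by the mean value theorem they differ by `y` times the truncation term of `pairing_deriv` at
an intermediate point. -/
lemma pairing_tendsto (m s : ℕ) {y : ℝ} (hy0 : 0 < y) (hy1 : y < 1) :
    Filter.Tendsto (fun M : ℕ =>
      (∑ n ∈ Icc 1 M, outerSum y M (m + 1) n * innerSum (fun k => 1 - y ^ k) (s + 1) n / (n : ℝ)) -
      ∑ n ∈ Icc 1 M, outerSum 0 M (m + 1) n * innerSum (fun k => 1 - 0 ^ k) (s + 1) n / (n : ℝ))
      Filter.atTop (nhds 0) := by
  have h1y : 0 < 1 - y := by linarith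
  obtain ⟨C, hC, hH⟩ := harm_pow_le (m + (s + 1))
  obtain ⟨K, hK, hG⟩ := geom_harm_le hy0.le hy1
  set S : ℕ → ℝ → ℝ := fun M t => ∑ n ∈ Icc 1 M,
    outerSum t M (m + 1) n * innerSum (fun k => 1 - t ^ k) (s + 1) n / (n : ℝ) with hS
  have bound : ∀ M : ℕ, 1 ≤ M → |S M y - S M 0| ≤
      (C * K / (1 - y)) * (M : ℝ) ^ (-(1 / 2) : ℝ) := by
    intro M hM
    have hM0 : (0 : ℝ) < M := by exact_mod_cast hM
    have hcont : Continuous (S M) := by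
      have hA : ∀ m n, Continuous fun t => outerSum t M m n := by
        intro m
        induction m with
        | zero => intro n; exact continuous_const
        | succ m ih => intro n; simp only [outerSum]; fun_prop
      have hB : ∀ s n, Continuous fun t : ℝ => innerSum (fun k => 1 - t ^ k) s n := by
        intro s
        induction s with
        | zero => intro n; simp only [innerSum]; fun_prop
        | succ s ih => intro n; simp only [innerSum]; fun_prop
      have hA' := hA (m + 1)
      have hB' := hB (s + 1)
      simp only [hS]
      fun_prop
    obtain ⟨c, ⟨hc0, hcy⟩, hc⟩ := exists_hasDerivAt_eq_slope (S M) _ hy0 hcont.continuousOn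
      (fun x hx => pairing_deriv M m s x hx.1 (hx.2.trans hy1))
    have hc1 : c < 1 := hcy.trans hy1
    set E := ∑ n ∈ Icc 1 M, c ^ (M - n) / (n : ℝ) *
        (outerSum 1 M m n * innerSum (fun k => 1 - c ^ k) (s + 1) n) with hE
    have hck : ∀ n : ℕ, 0 ≤ 1 - c ^ n := fun n => by
      linarith [pow_le_one₀ (n := n) hc0.le hc1.le]
    have hE0 : 0 ≤ E := sum_nonneg fun n _ => mul_nonneg (by positivity)
      (mul_nonneg (outerSum_nonneg zero_le_one _ _ _) (innerSum_nonneg _ hck _ _))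
    have hE1 : E ≤ K / M * (C * (M : ℝ) ^ (1 / 2 : ℝ)) := by
      calc E ≤ ∑ n ∈ Icc 1 M, y ^ (M - n) / (n : ℝ) * harm M ^ (m + (s + 1)) := by
            refine sum_le_sum fun n hn => ?_
            have hn := mem_Icc.mp hn
            refine mul_le_mul ?_ ?_ (mul_nonneg (outerSum_nonneg zero_le_one _ _ _)
              (innerSum_nonneg _ hck _ _)) (by positivity)
            · exact div_le_div_of_nonneg_right (pow_le_pow_left₀ hc0.le hcy.le _) (by positivity)
            · rw [pow_add]
              refine mul_le_mul (outerSum_one_le_harm M m n hn.1) ?_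
                (innerSum_nonneg _ hck _ _) (pow_nonneg (harm_nonneg M) m)
              refine (innerSum_mono (v := fun _ => 1) (fun k => ?_) _ _).trans
                ((innerSum_le_harm _ _).trans
                  (pow_le_pow_left₀ (harm_nonneg n) (harm_mono hn.2) _))
              linarith [pow_nonneg hc0.le k]
        _ ≤ _ := by
            rw [← sum_mul]
            exact mul_le_mul (hG M) (hH M hM) (pow_nonneg (harm_nonneg M) _) (by positivity)
    have hdiff : S M y - S M 0 = -(y * (E / (1 - c))) := by
      rw [sub_zero, eq_div_iff hy0.ne'] at hc
      rw [← hc]; ring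
    have hrp : K / M * (C * (M : ℝ) ^ (1 / 2 : ℝ)) = C * K * (M : ℝ) ^ (-(1 / 2) : ℝ) := by
      have : (M : ℝ) ^ (1 / 2 : ℝ) = M * (M : ℝ) ^ (-(1 / 2) : ℝ) := by
        rw [← Real.rpow_one_add' hM0.le (by norm_num)]; norm_num
      rw [this]; field_simp
    rw [hrp] at hE1
    have h1c : 0 < 1 - c := by linarith
    rw [hdiff, abs_neg, abs_of_nonneg (by positivity)]
    calc y * (E / (1 - c)) ≤ 1 * (E / (1 - y)) := by
          refine mul_le_mul hy1.le ?_ (by positivity) zero_le_one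
          exact div_le_div_of_nonneg_left hE0 h1y (by linarith)
      _ ≤ C * K * (M : ℝ) ^ (-(1 / 2) : ℝ) / (1 - y) := by
          rw [one_mul]; exact div_le_div_of_nonneg_right hE1 h1y.le
      _ = _ := by ring
  have hlim : Filter.Tendsto (fun M : ℕ => (C * K / (1 - y)) * (M : ℝ) ^ (-(1 / 2) : ℝ))
      Filter.atTop (nhds 0) := by
    have := ((tendsto_rpow_neg_atTop (y := 1 / 2) (by norm_num)).comp
      tendsto_natCast_atTop_atTop).const_mul (C * K / (1 - y))
    simpa using this
  refine squeeze_zero_norm' ?_ hlim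
  filter_upwards [Filter.eventually_ge_atTop 1] with M hM
  exact bound M hM

/-! ### Sums over weakly decreasing tuples -/

lemma mem_decT {n r : ℕ} {f : Fin r → ℕ} :
    f ∈ decT n r ↔ (∀ i, 1 ≤ f i ∧ f i ≤ n) ∧ ∀ i j : Fin r, i ≤ j → f j ≤ f i := by
  simp only [decT, mem_filter, Fintype.mem_piFinset, mem_Icc]
  tauto

/-- The sum of `∏ i, g i (f i)` over weakly decreasing tuples `n ≥ f 0 ≥ ⋯ ≥ f (N - 1) ≥ 1`. The
weights are indexed by `ℕ`, so that removing the first entry is the shift `i ↦ i + 1`. -/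
noncomputable def starSum (g : ℕ → ℕ → ℝ) (n N : ℕ) : ℝ :=
  ∑ f ∈ decT n N, ∏ i : Fin N, g i (f i)

lemma starSum_zero (g : ℕ → ℕ → ℝ) (n : ℕ) : starSum g n 0 = 1 := by
  have : decT n 0 = {Fin.elim0} := by
    ext f
    simp only [mem_decT, mem_singleton]
    exact ⟨fun _ => Subsingleton.elim _ _, fun _ => ⟨fun i => i.elim0, fun i => i.elim0⟩⟩
  simp [starSum, this]

/-- Summation over the first entry last. -/
lemma starSum_succ (g : ℕ → ℕ → ℝ) (n N : ℕ) :
    starSum g n (N + 1) = ∑ k ∈ Icc 1 n, g 0 k * starSum (fun i => g (i + 1)) k N := by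
  simp only [starSum, mul_sum]
  rw [sum_sigma']
  refine sum_bij' (fun f _ => ⟨f 0, fun i => f i.succ⟩) (fun p _ => Fin.cons p.1 p.2) ?_ ?_ ?_ ?_ ?_
  · intro f hf
    rw [mem_decT] at hf
    rw [mem_sigma, mem_Icc, mem_decT]
    exact ⟨hf.1 0, fun i => ⟨(hf.1 i.succ).1, hf.2 _ _ (Fin.zero_le _)⟩,
      fun i j hij => hf.2 _ _ (Fin.succ_le_succ_iff.mpr hij)⟩
  · rintro ⟨k, f⟩ hf
    rw [mem_sigma, mem_Icc, mem_decT] at hf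
    obtain ⟨hk, hf1, hf2⟩ := hf
    rw [mem_decT]
    refine ⟨fun i => ?_, fun i j hij => ?_⟩
    · refine Fin.cases ?_ (fun i => ?_) i
      · simpa using hk
      · simpa using ⟨(hf1 i).1, (hf1 i).2.trans hk.2⟩
    · revert hij
      refine Fin.cases ?_ (fun i => ?_) i <;> refine Fin.cases ?_ (fun j => ?_) j
      · simp
      · intro _; simpa using (hf1 j).2
      · intro h; simp at h
      · intro h; simpa using hf2 i j (Fin.succ_le_succ_iff.mp h)
  · intro f _
    exact Fin.cons_self_tail f
  · rintro ⟨k, f⟩ _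
    simp
  · intro f _
    rw [Fin.prod_univ_succ]
    simp

lemma starSum_inner (w : ℕ → ℝ) (s : ℕ) (g : ℕ → ℕ → ℝ) (h1 : ∀ i < s, ∀ k, g i k = 1 / (k : ℝ))
    (h2 : ∀ k, g s k = w k / k) (n : ℕ) : starSum g n (s + 1) = innerSum w (s + 1) n := by
  induction s generalizing g n with
  | zero =>
    rw [starSum_succ, innerSum]
    simp [starSum_zero, h2, innerSum]
  | succ s ih =>
    rw [starSum_succ, innerSum]
    refine sum_congr rfl fun k _ => ?_
    rw [ih _ (fun i hi => h1 (i + 1) (by omega)) h2, h1 0 (by omega), one_div_mul_eq_div]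

lemma sum_Icc_swap (u v : ℕ → ℝ) (M : ℕ) :
    ∑ n ∈ Icc 1 M, u n * ∑ k ∈ Icc 1 n, v k = ∑ k ∈ Icc 1 M, (∑ n ∈ Icc k M, u n) * v k := by
  simp only [mul_sum, sum_mul]
  refine sum_comm' fun a b => ?_
  simp only [mem_Icc]
  omega

lemma outerSum_scaled (y : ℝ) (M m n : ℕ) :
    ∑ k ∈ Icc n M, y ^ k * outerSum y M m k / (k : ℝ) = y ^ n * outerSum y M (m + 1) n := by
  rw [outerSum, mul_sum]
  refine sum_congr rfl fun k hk => ?_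
  obtain ⟨j, rfl⟩ := Nat.exists_eq_add_of_le (mem_Icc.mp hk).1
  rw [Nat.add_sub_cancel_left, pow_add]
  ring

/-- Interchanging the order of summation moves `m` middle entries of weight `1 / k` into the outer
sum. -/
lemma starSum_middle (y : ℝ) (M N m j : ℕ) (g : ℕ → ℕ → ℝ)
    (h : ∀ i < m, ∀ k, g i k = 1 / (k : ℝ)) :
    ∑ n ∈ Icc 1 M, y ^ n * outerSum y M j n / (n : ℝ) * starSum g n (m + N) =
      ∑ n ∈ Icc 1 M, y ^ n * outerSum y M (j + m) n / (n : ℝ)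
        * starSum (fun i => g (i + m)) n N := by
  induction m generalizing j g with
  | zero => simp
  | succ m ih =>
    rw [show m + 1 + N = m + N + 1 by omega]
    simp only [starSum_succ g]
    rw [sum_Icc_swap]
    simp only [outerSum_scaled, h 0 (by omega)]
    have := ih (j + 1) (fun i => g (i + 1)) (fun i hi => h (i + 1) (by omega))
    rw [show j + (m + 1) = j + 1 + m by omega]
    simp only [show ∀ i, i + (m + 1) = i + m + 1 from fun i => by omega]
    rw [← this]
    exact sum_congr rfl fun k _ => by ring

/-- A truncated `Li*` with arguments `(y, {1}_m, y⁻¹, {1}_s, ·)` and weight `w` for the last entry,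
split at the index carrying `y⁻¹`. -/
lemma starSum_eq_pairing (y : ℝ) (hy : y ≠ 0) (w : ℕ → ℝ) (m s M : ℕ) :
    starSum (fun i k => (if i = 0 then y ^ k else 1) * (if i = m + 1 then y⁻¹ ^ k else 1) *
        (if i = m + (s + 2) then w k else 1) * (1 / (k : ℝ))) M (m + (s + 2) + 1) =
      ∑ n ∈ Icc 1 M, outerSum y M (m + 1) n * innerSum w (s + 1) n / (n : ℝ) := by
  rw [starSum_succ]
  have h0 := starSum_middle y M (s + 2) m 0 (fun i k => (if i + 1 = 0 then y ^ k else 1) *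
    (if i + 1 = m + 1 then y⁻¹ ^ k else 1) *
        (if i + 1 = m + (s + 2) then w k else 1) * (1 / (k : ℝ))) (by
      intro i hi k
      rw [if_neg (by omega), if_neg (by omega), if_neg (by omega)]
      ring)
  refine Eq.trans (sum_congr rfl fun n _ => ?_) (h0.trans ?_)
  · congr 1
    rw [if_pos rfl, if_neg (by omega), if_neg (by omega), outerSum]
    ring
  · simp only [starSum_succ _ _ (s + 1)]
    rw [sum_Icc_swap]
    refine sum_congr rfl fun k _ => ?_
    rw [outerSum_scaled, starSum_inner w s, if_neg (by omega), if_pos (by omega), if_neg (by omega)]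
    · rw [zero_add, inv_pow]
      field_simp
    · intro i hi k
      rw [if_neg (by omega), if_neg (by omega), if_neg (by omega)]
      ring
    · intro k
      rw [if_neg (by omega), if_neg (by omega), if_pos (by omega)]
      ring

lemma innerSum_congr {w v : ℕ → ℝ} (h : ∀ k, 1 ≤ k → w k = v k) (s n : ℕ) (hn : 1 ≤ n) :
    innerSum w s n = innerSum v s n := by
  induction s generalizing n with
  | zero => exact h n hn
  | succ s ih => exact sum_congr rfl fun j hj => by rw [ih j (mem_Icc.mp hj).1]

/-- At `y = 0` only the tuples `n₁ = ⋯ = n_m = n` contribute. -/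
lemma outerSum_at_zero (M m n : ℕ) (hn : n ≤ M) : outerSum 0 M m n = 1 / (n : ℝ) ^ m := by
  induction m with
  | zero => simp [outerSum]
  | succ m ih => rw [outerSum_step _ _ _ _ hn, ih, zero_mul, add_zero, pow_succ, div_div]

/-- The truncated `ζ*(m + 2, {1}_{s + 1})` is the same pairing of outer and inner sums at
`y = 0`. -/
lemma starSum_eq_pairing_zero (m s M : ℕ) :
    starSum (fun i k => (if i = 0 then 1 / (k : ℝ) ^ (m + 1) else 1) * (1 / (k : ℝ))) M (s + 2) =
      ∑ n ∈ Icc 1 M, outerSum 0 M (m + 1) n * innerSum (fun _ => 1) (s + 1) n / (n : ℝ) := by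
  rw [starSum_succ]
  refine sum_congr rfl fun k hk => ?_
  rw [starSum_inner (fun _ => 1) s, outerSum_at_zero _ _ _ (mem_Icc.mp hk).2, if_pos rfl]
  · ring
  · intro i _ k; simp
  · intro k; simp

/-- For nonnegative summands, boundedness of the sums over tuples with entries at most `M` implies
their convergence to the sum over all weakly decreasing tuples of positive integers. -/
lemma tsum_of_bounded {N : ℕ} (F : (Fin N → ℕ) → ℝ) (hF : ∀ f, 0 ≤ F f) {K : ℝ}
    (hK : ∀ M, ∑ f ∈ decT M N, F f ≤ K) :
    Filter.Tendsto (fun M => ∑ f ∈ decT M N, F f) Filter.atTop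
      (nhds (∑' f : {f : Fin N → ℕ // (∀ i, 1 ≤ f i) ∧ ∀ i j, i ≤ j → f j ≤ f i}, F f.1)) := by
  classical
  set p : (Fin N → ℕ) → Prop := fun f => (∀ i, 1 ≤ f i) ∧ ∀ i j, i ≤ j → f j ≤ f i
  have hsub : ∀ M, ∑ x ∈ (decT M N).subtype p, F x.1 = ∑ f ∈ decT M N, F f := fun M =>
    sum_subtype_of_mem F fun f hf =>
      ⟨fun i => ((mem_decT.mp hf).1 i).1, (mem_decT.mp hf).2⟩
  have hmono : Monotone fun M => (decT M N).subtype p := by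
    intro a b hab x hx
    rw [mem_subtype, mem_decT] at hx ⊢
    exact ⟨fun i => ⟨(hx.1 i).1, (hx.1 i).2.trans hab⟩, hx.2⟩
  have hex : ∀ x : Subtype p, ∃ M, x ∈ (decT M N).subtype p := fun x =>
    ⟨∑ i, x.1 i, by
      rw [mem_subtype, mem_decT]
      exact ⟨fun i => ⟨x.2.1 i, single_le_sum (fun _ _ => Nat.zero_le _) (mem_univ i)⟩, x.2.2⟩⟩
  have hlim := Filter.tendsto_atTop_finset_of_monotone hmono hex
  have hs : Summable fun x : Subtype p => F x.1 := by
    refine summable_of_sum_le (c := K) (fun x => hF _) fun u => ?_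
    obtain ⟨M, hM⟩ := (hlim.eventually (Filter.eventually_ge_atTop u)).exists
    exact (sum_le_sum_of_subset_of_nonneg hM fun _ _ _ => hF _).trans ((hsub M).trans_le (hK M))
  refine (hs.hasSum.comp hlim).congr fun M => ?_
  exact hsub M

lemma prod_fin_ite {N a : ℕ} (ha : a < N) (h : ℕ → ℝ) (f : Fin N → ℕ) :
    ∏ i : Fin N, (if (i : ℕ) = a then h (f i) else 1) = h (f ⟨a, ha⟩) := by
  rw [prod_eq_single ⟨a, ha⟩]
  · simp
  · intro b _ hb
    rw [if_neg]
    exact fun h => hb (Fin.ext h)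
  · simp

/-! ### The identity -/

/-- Theorem 1.4, case `r ≥ 2`: `ζ*(m+2,{1}_{r-1})` as a difference of
multiple polylogarithm star values `Li*_{{1}_{m+r+1}}`. -/
theorem mzsv_eq_mpl_star (m r : ℕ) (hr : 2 ≤ r) (y : ℝ) (hy0 : 0 < y) (hy1 : y < 1) :
    (∑' f : {f : Fin r → ℕ // (∀ i, 1 ≤ f i) ∧ ∀ i j, i ≤ j → f j ≤ f i},
        1 / ((f.1 ⟨0, by omega⟩ : ℝ) ^ (m + 1) * ∏ i, (f.1 i : ℝ))) =
      (∑' f : {f : Fin (m + r + 1) → ℕ // (∀ i, 1 ≤ f i) ∧ ∀ i j, i ≤ j → f j ≤ f i},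
          y ^ (f.1 ⟨0, by omega⟩) * (y⁻¹) ^ (f.1 ⟨m + 1, by omega⟩) / ∏ i, (f.1 i : ℝ)) -
        ∑' f : {f : Fin (m + r + 1) → ℕ // (∀ i, 1 ≤ f i) ∧ ∀ i j, i ≤ j → f j ≤ f i},
          y ^ (f.1 ⟨0, by omega⟩) * (y⁻¹) ^ (f.1 ⟨m + 1, by omega⟩) *
              y ^ (f.1 ⟨m + r, by omega⟩) / ∏ i, (f.1 i : ℝ) := by
  obtain ⟨s, rfl⟩ : ∃ s, r = s + 2 := ⟨r - 2, by omega⟩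
  have eL : ∀ M, ∑ f ∈ decT M (s + 2),
      1 / ((f ⟨0, by omega⟩ : ℝ) ^ (m + 1) * ∏ i, (f i : ℝ)) =
      ∑ n ∈ Icc 1 M, outerSum 0 M (m + 1) n * innerSum (fun _ => 1) (s + 1) n / (n : ℝ) := by
    intro M
    rw [← starSum_eq_pairing_zero, starSum]
    refine sum_congr rfl fun f _ => ?_
    rw [prod_mul_distrib, prod_fin_ite (by omega) (fun k => 1 / (k : ℝ) ^ (m + 1))]
    simp [mul_comm]
  have eR : ∀ (w : ℕ → ℝ) M, ∑ f ∈ decT M (m + (s + 2) + 1),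
      y ^ (f ⟨0, by omega⟩) * (y⁻¹) ^ (f ⟨m + 1, by omega⟩) *
              w (f ⟨m + (s + 2), by omega⟩) / ∏ i, (f i : ℝ) =
      ∑ n ∈ Icc 1 M, outerSum y M (m + 1) n * innerSum w (s + 1) n / (n : ℝ) := by
    intro w M
    rw [← starSum_eq_pairing y hy0.ne', starSum]
    refine sum_congr rfl fun f _ => ?_
    rw [prod_mul_distrib, prod_mul_distrib, prod_mul_distrib,
      prod_fin_ite (by omega) (fun k => y ^ k), prod_fin_ite (by omega) (fun k => y⁻¹ ^ k),
      prod_fin_ite (by omega) w]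
    simp [div_eq_mul_inv]
  obtain ⟨K0, hK0⟩ := pairing_bounded m (s + 1) (le_refl (0 : ℝ)) zero_lt_one
  obtain ⟨K1, hK1⟩ := pairing_bounded m (s + 1) hy0.le hy1
  have hK2 : ∀ M : ℕ, ∑ n ∈ Icc 1 M, outerSum y M (m + 1) n *
      innerSum (fun k => y ^ k) (s + 1) n / (n : ℝ) ≤ K1 := fun M =>
    (sum_le_sum fun n _ => div_le_div_of_nonneg_right (mul_le_mul_of_nonneg_left
      (innerSum_mono (fun k => pow_le_one₀ hy0.le hy1.le) _ _)
      (outerSum_nonneg hy0.le _ _ _)) (by positivity)).trans (hK1 M)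
  have tL := tsum_of_bounded
    (fun f : Fin (s + 2) → ℕ => 1 / ((f ⟨0, by omega⟩ : ℝ) ^ (m + 1) * ∏ i, (f i : ℝ)))
    (fun f => by positivity) (fun M => (eL M).trans_le (hK0 M))
  have t1 := tsum_of_bounded (fun f : Fin (m + (s + 2) + 1) → ℕ =>
      y ^ (f ⟨0, by omega⟩) * (y⁻¹) ^ (f ⟨m + 1, by omega⟩) * 1 / ∏ i, (f i : ℝ))
    (fun f => by positivity) (fun M => (eR (fun _ => 1) M).trans_le (hK1 M))
  have t2 := tsum_of_bounded (fun f : Fin (m + (s + 2) + 1) → ℕ =>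
      y ^ (f ⟨0, by omega⟩) * (y⁻¹) ^ (f ⟨m + 1, by omega⟩) *
        y ^ (f ⟨m + (s + 2), by omega⟩) / ∏ i, (f i : ℝ))
    (fun f => by positivity) (fun M => (eR (fun k => y ^ k) M).trans_le (hK2 M))
  have hz := pairing_tendsto m s hy0 hy1
  have key := tendsto_nhds_unique ((t1.sub t2).sub tL) (hz.congr fun M => by
    rw [eL M, eR (fun k => y ^ k) M, eR (fun _ => 1) M]
    congr 1
    · simp only [innerSum_sub (fun _ => 1), mul_sub, sub_div, sum_sub_distrib]
    · refine sum_congr rfl fun n hn => ?_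
      rw [innerSum_congr (v := fun _ => 1) _ _ _ (mem_Icc.mp hn).1]
      intro k hk
      rw [zero_pow (by omega), sub_zero])
  simp only [mul_one] at key
  linarith
end

section
/- Let m ≥ 0 be an integer and y ∈ (0,1) a real number. Then ζ*(m+2) = Li*_{{1}_{m+2}}(y, {1}_m, y^{−1}) − Li*_{{1}_{m+2}}(y, {1}_{m+1}), i.e. Σ_{n≥1} 1/n^{m+2} = Σ_{n_1 ≥ ... ≥ n_{m+2} ≥ 1} (y^{n_1} y^{−n_{m+2}})/(n_1 n_2 ··· n_{m+2}) − Σ_{n_1 ≥ ... ≥ n_{m+2} ≥ 1} y^{n_1}/(n_1 n_2 ··· n_{m+2}). -/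
/-!
Both multiple sums depend on a weakly decreasing tuple `n₁ ≥ ⋯ ≥ n_{m+2}` only through its two
extreme entries and the weight `1/(n₁ ⋯ n_{m+2})`. Fixing `n₁ = a` and `n_{m+2} = b`, the middle
entries contribute `h_m(b, a)`, the complete homogeneous symmetric polynomial of degree `m` in
`1/b, …, 1/a` (`hsum`, `tsum_wt`). Expand both sums in powers of `y`.

* The first sum has `y^d` with `d = a - b`. For `d = 0` the coefficient is `∑ 1/b^(m+2)`, the zeta
  value. For `d ≥ 1`, comparing `h_{m+1}(b, b+d)` with either end variable split off
  (`hsum_left`, `hsum_right`) gives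
  `h_m(b, b+d) / (b (b+d)) = (h_{m+1}(b, b+d-1) - h_{m+1}(b+1, b+d)) / d`,
  so the sum over `b ≥ 1` telescopes to `h_{m+1}(1, d) / d` (`hasSum_endWeight_gap`).
* The second sum has `y^d` with `d = a`, and its coefficient is again `h_{m+1}(1, d) / d`
  (`sum_endWeight`).

All rearrangements take place in `ENNReal`. The second sum is finite because `h_{m+1}(1, d)` is
at most `d^(m+1)`, so the two sums may be subtracted.
-/

open scoped BigOperators

/-! ### Complete homogeneous symmetric polynomials in reciprocals -/

/-- `hsum r b a` is the complete homogeneous symmetric polynomial of degree `r` evaluated at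
`1/b, 1/(b+1), …, 1/a`, defined by recursion on the degree: `n` is the largest index used. -/
noncomputable def hsum : ℕ → ℕ → ℕ → ℝ
  | 0, _, _ => 1
  | r + 1, b, a => ∑ n ∈ Finset.Icc b a, 1 / (n : ℝ) * hsum r b n

lemma hsum_nonneg (r b a : ℕ) : 0 ≤ hsum r b a := by
  induction r generalizing a with
  | zero => simp [hsum]
  | succ r ih =>
    rw [hsum]
    exact Finset.sum_nonneg fun n _ => mul_nonneg (by positivity) (ih n)

lemma hsum_empty (r b a : ℕ) (h : a < b) : hsum (r + 1) b a = 0 := by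
  rw [hsum, Finset.Icc_eq_empty (by omega), Finset.sum_empty]

lemma hsum_self (r b : ℕ) : hsum r b b = (1 / (b : ℝ)) ^ r := by
  induction r with
  | zero => simp [hsum]
  | succ r ih => rw [hsum, Finset.Icc_self, Finset.sum_singleton, ih, pow_succ']

/-- Splitting off the variable `1/(a+1)`. -/
lemma hsum_right (r b a : ℕ) (h : b ≤ a + 1) :
    hsum (r + 1) b (a + 1) = hsum (r + 1) b a + 1 / ((a + 1 : ℕ) : ℝ) * hsum r b (a + 1) := by
  rw [hsum, Finset.sum_Icc_succ_top h, hsum.eq_2 b a r]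

/-- Splitting off the variable `1/b`. -/
lemma hsum_left (r b a : ℕ) (h : b ≤ a) :
    hsum (r + 1) b a = hsum (r + 1) (b + 1) a + 1 / (b : ℝ) * hsum r b a := by
  induction r generalizing a with
  | zero =>
    rw [hsum.eq_2, hsum.eq_2 (b + 1), ← Finset.sum_Ioc_add_eq_sum_Icc h,
      Finset.Icc_add_one_left_eq_Ioc]
    simp [hsum]
  | succ r ih =>
    rw [hsum, Finset.sum_congr rfl fun n hn => by rw [ih n (Finset.mem_Icc.1 hn).1]]
    simp only [mul_add, Finset.sum_add_distrib]
    rw [← Finset.sum_Ioc_add_eq_sum_Icc h, hsum_empty r (b + 1) b (by omega), mul_zero, add_zero,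
      hsum, Finset.Icc_add_one_left_eq_Ioc]
    congr 1
    rw [hsum, Finset.mul_sum]
    exact Finset.sum_congr rfl fun n _ => by ring

/-- The difference of the two splittings, which makes the sum over `b` telescope. -/
lemma hsum_telescope (m b e : ℕ) (hb : 1 ≤ b) :
    1 / (b : ℝ) * (1 / ((b + (e + 1) : ℕ) : ℝ)) * hsum m b (b + (e + 1)) =
      1 / ((e + 1 : ℕ) : ℝ) * (hsum (m + 1) b (b + e) - hsum (m + 1) (b + 1) (b + 1 + e)) := by
  have h1 := hsum_left m b (b + e + 1) (by omega)
  have h2 := hsum_right m b (b + e) (by omega)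
  have h3 : hsum (m + 1) b (b + e) - hsum (m + 1) (b + 1) (b + 1 + e) =
      (1 / (b : ℝ) - 1 / ((b + e + 1 : ℕ) : ℝ)) * hsum m b (b + e + 1) := by
    rw [show b + 1 + e = b + e + 1 by ring]
    linarith
  rw [h3, ← add_assoc]
  have hb' : (b : ℝ) ≠ 0 := by positivity
  push_cast
  have : (b : ℝ) + e + 1 ≠ 0 := by positivity
  have : (e : ℝ) + 1 ≠ 0 := by positivity
  field_simp
  ring

/-- A crude bound: at each level there are at most `d` indices `n`, each of weight
`1/n ≤ 1`. -/
lemma hsum_le (r b d : ℕ) (hb : 1 ≤ b) (a : ℕ) (ha : a < b + d) : hsum r b a ≤ (d : ℝ) ^ r := by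
  induction r generalizing a with
  | zero => simp [hsum]
  | succ r ih =>
    rw [hsum]
    calc _ ≤ ∑ n ∈ Finset.Icc b a, (d : ℝ) ^ r := by
          refine Finset.sum_le_sum fun n hn => ?_
          obtain ⟨hn1, hn2⟩ := Finset.mem_Icc.1 hn
          have h1 : 1 / (n : ℝ) ≤ 1 := by
            have hn : 1 ≤ n := hb.trans hn1
            rw [div_le_one (by positivity)]
            exact_mod_cast hn
          calc _ ≤ 1 * hsum r b n := mul_le_mul_of_nonneg_right h1 (hsum_nonneg _ _ _)
            _ ≤ _ := by rw [one_mul]; exact ih n (by omega)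
      _ ≤ (d : ℝ) * (d : ℝ) ^ r := by
          rw [Finset.sum_const, nsmul_eq_mul]
          refine mul_le_mul_of_nonneg_right ?_ (by positivity)
          rw [Nat.card_Icc]
          exact_mod_cast (by omega : a + 1 - b ≤ d)
      _ = _ := by rw [pow_succ']

/-- A bound showing that `hsum` over a sliding window of `d` indices tends to `0`. -/
lemma hsum_succ_le (r b d : ℕ) (hb : 1 ≤ b) (a : ℕ) (ha : a < b + d) :
    hsum (r + 1) b a ≤ 1 / (b : ℝ) * (d : ℝ) ^ (r + 1) := by
  rw [hsum]
  calc _ ≤ ∑ n ∈ Finset.Icc b a, 1 / (b : ℝ) * (d : ℝ) ^ r := by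
        refine Finset.sum_le_sum fun n hn => ?_
        obtain ⟨hn1, hn2⟩ := Finset.mem_Icc.1 hn
        have h1 : 1 / (n : ℝ) ≤ 1 / b :=
          one_div_le_one_div_of_le (by positivity) (by exact_mod_cast hn1)
        exact mul_le_mul h1 (hsum_le r b d hb n (by omega)) (hsum_nonneg _ _ _) (by positivity)
    _ ≤ (d : ℝ) * (1 / (b : ℝ) * (d : ℝ) ^ r) := by
        rw [Finset.sum_const, nsmul_eq_mul]
        refine mul_le_mul_of_nonneg_right ?_ (by positivity)
        rw [Nat.card_Icc]
        exact_mod_cast (by omega : a + 1 - b ≤ d)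
    _ = _ := by ring

/-! ### Summing over the window with prescribed extreme entries -/

/-- `endWeight m b a` is, for `1 ≤ b ≤ a`, the total weight of the weakly decreasing tuples of
length `m + 2` with largest entry `a` and smallest entry `b`. -/
noncomputable def endWeight (m b a : ℕ) : ℝ := 1 / (b : ℝ) * (1 / (a : ℝ)) * hsum m b a

lemma endWeight_nonneg (m b a : ℕ) : 0 ≤ endWeight m b a :=
  mul_nonneg (by positivity) (hsum_nonneg _ _ _)

/-- Summing over all pairs of extreme entries with fixed gap `e + 1`: the sum telescopes. -/
lemma hasSum_endWeight_gap (m e : ℕ) :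
    HasSum (fun b : ℕ => endWeight m (1 + b) (1 + b + (e + 1)))
      (1 / ((e + 1 : ℕ) : ℝ) * hsum (m + 1) 1 (e + 1)) := by
  rw [hasSum_iff_tendsto_nat_of_nonneg fun b => endWeight_nonneg _ _ _]
  set U : ℕ → ℝ := fun b => hsum (m + 1) (1 + b) (1 + b + e) with hU
  have hU0 : Filter.Tendsto U Filter.atTop (nhds 0) := by
    have hlim : Filter.Tendsto (fun b : ℕ => 1 / ((b : ℝ) + 1) * ((e + 1 : ℕ) : ℝ) ^ (m + 1))
        Filter.atTop (nhds 0) := by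
      simpa using (tendsto_one_div_add_atTop_nhds_zero_nat (𝕜 := ℝ)).mul_const
        (((e + 1 : ℕ) : ℝ) ^ (m + 1))
    refine squeeze_zero (fun b => hsum_nonneg _ _ _) (fun b => ?_) hlim
    have := hsum_succ_le m (1 + b) (e + 1) (by omega) (1 + b + e) (by omega)
    rwa [show ((1 + b : ℕ) : ℝ) = (b : ℝ) + 1 by push_cast; ring] at this
  have hpart : ∀ n : ℕ, ∑ b ∈ Finset.range n, endWeight m (1 + b) (1 + b + (e + 1)) =
      1 / ((e + 1 : ℕ) : ℝ) * (U 0 - U n) := by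
    intro n
    rw [← Finset.sum_range_sub', Finset.mul_sum]
    refine Finset.sum_congr rfl fun b _ => ?_
    rw [endWeight, hsum_telescope m (1 + b) e (by omega)]
    simp only [hU, add_assoc]
  simp only [hpart]
  have := (hU0.const_sub (U 0)).const_mul (1 / ((e + 1 : ℕ) : ℝ))
  simpa [hU, add_comm] using this

/-- Summing over the smallest entry with the largest entry `a` fixed. -/
lemma sum_endWeight (m a : ℕ) :
    ∑ b ∈ Finset.Icc 1 a, endWeight m b a = 1 / (a : ℝ) * hsum (m + 1) 1 a := by
  have key : ∀ k ≤ a, ∑ b ∈ Finset.Icc 1 k, 1 / (b : ℝ) * hsum m b a =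
      hsum (m + 1) 1 a - hsum (m + 1) (k + 1) a := by
    intro k
    induction k with
    | zero => simp
    | succ k ih =>
      intro hk
      rw [Finset.sum_Icc_succ_top (by omega), ih (by omega), hsum_left m (k + 1) a hk]
      ring
  have := key a le_rfl
  rw [hsum_empty m (a + 1) a (by omega), sub_zero] at this
  rw [← this, Finset.mul_sum]
  exact Finset.sum_congr rfl fun b _ => by rw [endWeight]; ring

/-! ### Reducing sums over decreasing tuples to double sums -/

/-- The summation domain: weakly decreasing tuples of positive integers. -/
def IsDecr {k : ℕ} (f : Fin k → ℕ) : Prop := (∀ i, 1 ≤ f i) ∧ ∀ i j, i ≤ j → f j ≤ f i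

lemma isDecr_cons {k : ℕ} (a : ℕ) (g : Fin (k + 1) → ℕ) :
    IsDecr (Fin.cons a g : Fin (k + 2) → ℕ) ↔ g 0 ≤ a ∧ IsDecr g := by
  constructor
  · rintro ⟨h1, h2⟩
    refine ⟨by simpa using h2 0 1 (by simp), fun i => by simpa using h1 i.succ, fun i j hij => ?_⟩
    simpa using h2 i.succ j.succ (Fin.succ_le_succ_iff.2 hij)
  · rintro ⟨ha, h1, h2⟩
    refine ⟨fun i => ?_, fun i j => ?_⟩
    · refine Fin.cases ?_ (fun i => ?_) i
      · simpa using (h1 0).trans ha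
      · simpa using h1 i
    · refine Fin.cases ?_ (fun i => ?_) i <;> refine Fin.cases ?_ (fun j => ?_) j
      · simp
      · intro _
        simpa using (h2 0 j (Fin.zero_le _)).trans ha
      · intro h
        simp at h
      · intro h
        simpa using h2 i j (Fin.succ_le_succ_iff.1 h)

open Classical in
/-- The weight `1/(f 0 ⋯ f (k-1))` of a tuple, extended by `0` off the summation domain. -/
noncomputable def wt {k : ℕ} (f : Fin k → ℕ) : ENNReal :=
  if IsDecr f then ENNReal.ofReal (∏ i, 1 / (f i : ℝ)) else 0

lemma wt_cons {k : ℕ} (a : ℕ) (g : Fin (k + 1) → ℕ) :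
    wt (Fin.cons a g : Fin (k + 2) → ℕ) =
      if g 0 ≤ a then ENNReal.ofReal (1 / (a : ℝ)) * wt g else 0 := by
  by_cases h : g 0 ≤ a ∧ IsDecr g
  · rw [wt, wt, if_pos ((isDecr_cons a g).2 h), if_pos h.1, if_pos h.2, Fin.prod_univ_succ,
      ENNReal.ofReal_mul (by simp)]
    simp
  · rw [wt, wt, if_neg fun h' => h ((isDecr_cons a g).1 h')]
    by_cases h1 : g 0 ≤ a
    · rw [if_pos h1, if_neg fun h2 => h ⟨h1, h2⟩, mul_zero]
    · rw [if_neg h1]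

lemma wt_one (g : Fin 1 → ℕ) :
    wt g = if 1 ≤ g 0 then ENNReal.ofReal (1 / (g 0 : ℝ)) else 0 := by
  have : IsDecr g ↔ 1 ≤ g 0 := by
    constructor
    · exact fun h => h.1 0
    · intro h
      refine ⟨fun i => by rwa [Subsingleton.elim i 0], fun i j _ => ?_⟩
      rw [Subsingleton.elim i j]
  unfold wt
  simp [this]

/-- Tonelli, peeling off the first (largest) coordinate. -/
lemma tsum_fin_cons {k : ℕ} (G : (Fin (k + 1) → ℕ) → ENNReal) :
    ∑' f, G f = ∑' a : ℕ, ∑' g : Fin k → ℕ, G (Fin.cons a g) := by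
  rw [← (Fin.consEquiv fun _ : Fin (k + 1) => ℕ).tsum_eq, ENNReal.tsum_prod']
  rfl

/-- A sum over decreasing tuples of a function of the two extreme entries only. -/
lemma tsum_wt (m : ℕ) (F : ℕ → ℕ → ENNReal) :
    ∑' f : Fin (m + 2) → ℕ, F (f 0) (f (Fin.last (m + 1))) * wt f =
      ∑' b : ℕ, ∑' a : ℕ,
        if 1 ≤ b ∧ b ≤ a then F a b * ENNReal.ofReal (endWeight m b a) else 0 := by
  induction m generalizing F with
  | zero =>
    rw [tsum_fin_cons, ENNReal.tsum_comm, ← (Equiv.funUnique (Fin 1) ℕ).symm.tsum_eq]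
    refine tsum_congr fun b => tsum_congr fun a => ?_
    rw [wt_cons, wt_one]
    have hl : (Fin.last (0 + 1)) = (0 : Fin 1).succ := rfl
    rw [hl, Fin.cons_succ, Fin.cons_zero]
    simp only [Equiv.funUnique_symm_apply, uniqueElim_const]
    by_cases h1 : 1 ≤ b <;> by_cases h2 : b ≤ a <;> simp only [h1, h2, and_self, and_true,
      and_false, if_true, if_false, mul_zero]
    rw [endWeight, hsum, mul_one, mul_comm (1 / (b : ℝ)), ENNReal.ofReal_mul (by positivity)]
  | succ m ih =>
    rw [tsum_fin_cons]
    -- For a fixed largest entry `a`, the remaining tuple has largest entry `n ≤ a`.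
    have step : ∀ a : ℕ, ∑' g : Fin (m + 2) → ℕ,
        F ((Fin.cons a g : Fin (m + 3) → ℕ) 0)
          ((Fin.cons a g : Fin (m + 3) → ℕ) (Fin.last (m + 2))) *
          wt (Fin.cons a g : Fin (m + 3) → ℕ) =
        ∑' b : ℕ, ∑' n : ℕ, if 1 ≤ b ∧ b ≤ n then
          (if n ≤ a then F a b * ENNReal.ofReal (1 / (a : ℝ)) else 0) *
            ENNReal.ofReal (endWeight m b n) else 0 := by
      intro a
      rw [← ih fun n b => if n ≤ a then F a b * ENNReal.ofReal (1 / (a : ℝ)) else 0]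
      refine tsum_congr fun g => ?_
      rw [wt_cons, ← Fin.succ_last, Fin.cons_succ, Fin.cons_zero]
      split_ifs <;> simp [mul_assoc]
    rw [tsum_congr step, ENNReal.tsum_comm]
    refine tsum_congr fun b => tsum_congr fun a => ?_
    by_cases hb : 1 ≤ b
    · rw [tsum_eq_sum (s := Finset.Icc b a)]
      · rw [Finset.sum_congr rfl (g := fun n => F a b * ENNReal.ofReal (1 / (a : ℝ)) *
          ENNReal.ofReal (endWeight m b n))]
        · rw [← Finset.mul_sum, ← ENNReal.ofReal_sum_of_nonneg fun n _ => endWeight_nonneg _ _ _]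
          by_cases hab : b ≤ a
          · rw [if_pos ⟨hb, hab⟩, mul_assoc, ← ENNReal.ofReal_mul (by positivity)]
            congr 2
            rw [endWeight, hsum, Finset.mul_sum, Finset.mul_sum]
            exact Finset.sum_congr rfl fun n _ => by rw [endWeight]; ring
          · rw [if_neg (by tauto), Finset.Icc_eq_empty hab]
            simp
        · intro n hn
          obtain ⟨h1, h2⟩ := Finset.mem_Icc.1 hn
          rw [if_pos ⟨hb, h1⟩, if_pos h2]
      · intro n hn
        rw [Finset.mem_Icc] at hn
        by_cases h1 : b ≤ n
        · rw [if_neg (show ¬ n ≤ a from fun h => hn ⟨h1, h⟩)]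
          simp
        · simp [h1]
    · simp [hb]

lemma tsum_if_ge (b : ℕ) (G : ℕ → ENNReal) :
    ∑' a, (if b ≤ a then G a else 0) = ∑' d, G (b + d) := by
  have hinj : Function.Injective fun d : ℕ => b + d := add_right_injective b
  rw [← hinj.tsum_eq (f := fun a => if b ≤ a then G a else 0)]
  · simp
  · intro a ha
    have : b ≤ a := by
      by_contra h
      simp [h] at ha
    exact ⟨a - b, by simp only; omega⟩

/-- Reindexing by the smallest entry `1 + b` and the gap `d`. -/
lemma tsum_if_ge_ge (G : ℕ → ℕ → ENNReal) :
    ∑' b : ℕ, ∑' a : ℕ, (if 1 ≤ b ∧ b ≤ a then G a b else 0) =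
      ∑' b : ℕ, ∑' d : ℕ, G (1 + b + d) (1 + b) := by
  rw [← tsum_if_ge 1 fun b => ∑' d, G (b + d) b]
  refine tsum_congr fun b => ?_
  by_cases hb : 1 ≤ b
  · simp only [hb, true_and, if_true]
    exact tsum_if_ge b fun a => G a b
  · simp [hb]

/-- Conversion of a real sum over the domain of the theorem to an extended nonnegative one. -/
lemma tsum_decr (m : ℕ) (F : ℕ → ℕ → ℝ) (hF : ∀ a b, 0 ≤ F a b) :
    ∑' f : {f : Fin (m + 2) → ℕ // (∀ i, 1 ≤ f i) ∧ ∀ i j, i ≤ j → f j ≤ f i},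
        F (f.1 0) (f.1 (Fin.last (m + 1))) / ∏ i, (f.1 i : ℝ) =
      (∑' b : ℕ, ∑' a : ℕ, if 1 ≤ b ∧ b ≤ a then
        ENNReal.ofReal (F a b) * ENNReal.ofReal (endWeight m b a) else 0).toReal := by
  classical
  rw [← tsum_wt m fun a b => ENNReal.ofReal (F a b)]
  have hsub : ∑' f : Fin (m + 2) → ℕ,
      ENNReal.ofReal (F (f 0) (f (Fin.last (m + 1)))) * wt f =
      ∑' f : {f : Fin (m + 2) → ℕ // (∀ i, 1 ≤ f i) ∧ ∀ i j, i ≤ j → f j ≤ f i},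
        ENNReal.ofReal (F (f.1 0) (f.1 (Fin.last (m + 1)))) * wt f.1 := by
    refine (tsum_subtype_eq_of_support_subset (s := {f : Fin (m + 2) → ℕ | IsDecr f}) ?_).symm
    intro f hf
    by_contra h
    have h' : ¬ IsDecr f := h
    simp [wt, h'] at hf
  rw [hsub, ENNReal.tsum_toReal_eq]
  · refine tsum_congr fun f => ?_
    have hd : IsDecr f.1 := f.2
    rw [wt, if_pos hd, ENNReal.toReal_mul, ENNReal.toReal_ofReal (hF _ _),
      ENNReal.toReal_ofReal (Finset.prod_nonneg fun i _ => by positivity), div_eq_mul_inv]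
    simp only [one_div, Finset.prod_inv_distrib]
  · intro f
    refine ENNReal.mul_ne_top ENNReal.ofReal_ne_top ?_
    unfold wt
    split_ifs <;> simp

/-- Theorem 1.4, case `r = 1`: `ζ*(m+2)` as a difference of
multiple polylogarithm star values `Li*_{{1}_{m+2}}`. -/
theorem zeta_eq_mpl_star (m : ℕ) (y : ℝ) (hy0 : 0 < y) (hy1 : y < 1) :
    (∑' n : ℕ+, 1 / (n : ℝ) ^ (m + 2)) =
      (∑' f : {f : Fin (m + 2) → ℕ // (∀ i, 1 ≤ f i) ∧ ∀ i j, i ≤ j → f j ≤ f i},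
          y ^ (f.1 ⟨0, by omega⟩) * (y⁻¹) ^ (f.1 ⟨m + 1, by omega⟩) / ∏ i, (f.1 i : ℝ)) -
        ∑' f : {f : Fin (m + 2) → ℕ // (∀ i, 1 ≤ f i) ∧ ∀ i j, i ≤ j → f j ≤ f i},
          y ^ (f.1 ⟨0, by omega⟩) / ∏ i, (f.1 i : ℝ) := by
  -- `B` is the second sum, organised by the largest entry `e + 1`.
  set B : ENNReal := ∑' e : ℕ, ENNReal.ofReal
    (y ^ (e + 1) * (1 / ((e + 1 : ℕ) : ℝ) * hsum (m + 1) 1 (e + 1))) with hB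
  have hBtop : B ≠ ⊤ := by
    have hs : Summable fun e : ℕ => (e : ℝ) ^ (m + 1) * y ^ e :=
      summable_pow_mul_geometric_of_norm_lt_one (m + 1) (by rwa [Real.norm_of_nonneg hy0.le])
    have hs' := (summable_nat_add_iff 1).2 hs
    refine Summable.tsum_ofReal_ne_top (Summable.of_nonneg_of_le (fun e => ?_) (fun e => ?_) hs')
    · exact mul_nonneg (by positivity) (mul_nonneg (by positivity) (hsum_nonneg _ _ _))
    · have h1 : 1 / ((e + 1 : ℕ) : ℝ) ≤ 1 := by
        rw [div_le_one (by positivity)]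
        exact_mod_cast Nat.le_add_left 1 e
      have h2 := hsum_le (m + 1) 1 (e + 1) le_rfl (e + 1) (by omega)
      have h3 : 1 / ((e + 1 : ℕ) : ℝ) * hsum (m + 1) 1 (e + 1) ≤ 1 * ((e + 1 : ℕ) : ℝ) ^ (m + 1) :=
        mul_le_mul h1 h2 (hsum_nonneg _ _ _) zero_le_one
      rw [mul_comm]
      exact mul_le_mul_of_nonneg_right (by linarith) (by positivity)
  have hz : Summable fun n : ℕ => 1 / (((1 + n : ℕ) : ℝ)) ^ (m + 2) := by
    have := (summable_nat_add_iff 1).2 (Real.summable_one_div_nat_pow.2 (by omega : 1 < m + 2))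
    simpa [add_comm] using this
  have hZ : (∑' n : ℕ, ENNReal.ofReal (1 / (((1 + n : ℕ) : ℝ)) ^ (m + 2))).toReal =
      ∑' n : ℕ+, 1 / (n : ℝ) ^ (m + 2) := by
    rw [ENNReal.tsum_toReal_eq fun _ => ENNReal.ofReal_ne_top,
      tsum_pnat_eq_tsum_succ (f := fun n : ℕ => 1 / (n : ℝ) ^ (m + 2))]
    refine tsum_congr fun n => ?_
    rw [ENNReal.toReal_ofReal (by positivity), add_comm]
  have h2 := tsum_decr m (fun a _ => y ^ a) fun a _ => by positivity
  have h1 := tsum_decr m (fun a b => y ^ a * y⁻¹ ^ b) fun a b => by positivity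
  rw [← hZ]
  refine Eq.trans ?_ (congrArg₂ (fun s t : ℝ => s - t) h1 h2).symm
  have e2 : (∑' b : ℕ, ∑' a : ℕ, if 1 ≤ b ∧ b ≤ a then
      ENNReal.ofReal (y ^ a) * ENNReal.ofReal (endWeight m b a) else 0) = B := by
    rw [ENNReal.tsum_comm, tsum_eq_zero_add' ENNReal.summable, hB]
    have h0 : (∑' b : ℕ, if 1 ≤ b ∧ b ≤ 0 then
        ENNReal.ofReal (y ^ 0) * ENNReal.ofReal (endWeight m b 0) else 0) = 0 := by
      refine ENNReal.tsum_eq_zero.2 fun b => if_neg (by omega)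
    rw [h0, zero_add]
    refine tsum_congr fun e => ?_
    rw [tsum_eq_sum (s := Finset.Icc 1 (e + 1)),
      Finset.sum_congr rfl fun b hb => if_pos (Finset.mem_Icc.1 hb), ← Finset.mul_sum,
      ← ENNReal.ofReal_sum_of_nonneg fun n _ => endWeight_nonneg _ _ _, sum_endWeight,
      ← ENNReal.ofReal_mul (by positivity)]
    intro b hb
    exact if_neg fun h => hb (Finset.mem_Icc.2 h)
  have e1 : (∑' b : ℕ, ∑' a : ℕ, if 1 ≤ b ∧ b ≤ a then
      ENNReal.ofReal (y ^ a * y⁻¹ ^ b) * ENNReal.ofReal (endWeight m b a) else 0) =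
      ∑' n : ℕ, ENNReal.ofReal (1 / (((1 + n : ℕ) : ℝ)) ^ (m + 2)) + B := by
    rw [tsum_if_ge_ge fun a b =>
      ENNReal.ofReal (y ^ a * y⁻¹ ^ b) * ENNReal.ofReal (endWeight m b a)]
    -- Organise by the gap `d = n₁ - n_{m+2}`; the gap `0` contributes the zeta value.
    have hpow : ∀ b d : ℕ, y ^ (1 + b + d) * y⁻¹ ^ (1 + b) = y ^ d := by
      intro b d
      rw [pow_add, inv_pow]
      field_simp
    simp only [hpow]
    rw [ENNReal.tsum_comm, tsum_eq_zero_add' ENNReal.summable, hB]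
    congr 1
    · refine tsum_congr fun b => ?_
      rw [pow_zero, ENNReal.ofReal_one, one_mul, endWeight, add_zero, hsum_self]
      congr 1
      rw [← one_div_pow]
      ring
    · refine tsum_congr fun e => ?_
      have hs := hasSum_endWeight_gap m e
      rw [ENNReal.tsum_mul_left, ← ENNReal.ofReal_tsum_of_nonneg
        (fun b => endWeight_nonneg _ _ _) hs.summable, hs.tsum_eq,
        ← ENNReal.ofReal_mul (by positivity)]
  rw [e1, e2, ENNReal.toReal_add hz.tsum_ofReal_ne_top hBtop, add_sub_cancel_right]
end

section
/- For all integers n ≥ 0 and m ≥ 0, ζ*_n({1}_m) = Y_m(n)/m!, i.e. Σ_{n ≥ n_1 ≥ ... ≥ n_m ≥ 1} 1/(n_1 ··· n_m) = (1/m!) Y_m(H_n, 1!H_n^{(2)}, 2!H_n^{(3)}, ..., (m−1)!H_n^{(m)}). -/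
/-!
The numbers `h_m = ζ*_n({1}_m)` are the complete homogeneous symmetric polynomials in
`1, 1/2, …, 1/n`, and the `genH n k` are the power sums `p_k` of the same variables. In terms of
generating functions, `E_n = Σ h_m X^m` satisfies `(1 - X/(n+1)) E_{n+1} = E_n`
(`one_sub_mul_starSeries`), while `P_n = Σ p_{k+1} X^k` satisfies
`(1 - X/(n+1)) (P_{n+1} - P_n) = 1/(n+1)` (`one_sub_mul_powerSumSeries`). An induction on `n` then
gives the logarithmic derivative `E_n' = P_n E_n` (`derivative_starSeries`), whose coefficients
are Newton's identities `(m+1) h_{m+1} = Σ_{j ≤ m} p_{m+1-j} h_j`. After multiplication by `m!`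
these become the recursion that defines the complete Bell polynomials at `x_k = (k-1)! p_k`.
-/

open scoped BigOperators

open PowerSeries

/-- The recursion on the depth; it also covers depth one, where `zstarZ` has its own clause. -/
lemma zstar_ones_succ (n m : ℕ) :
    zstar n (List.replicate (m + 1) 1)
      = ∑ k ∈ Finset.Icc 1 n, (1 / (k : ℝ)) * zstar k (List.replicate m 1) := by
  cases m with
  | zero => simp [zstar, zstarZ]
  | succ m => simp [zstar, List.replicate_succ, zstarZ]

lemma zstar_ones_zero (n : ℕ) : zstar n (List.replicate 0 1) = 1 := by
  simp [zstar, zstarZ]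

lemma zstar_ones_succ_succ (n m : ℕ) :
    zstar (n + 1) (List.replicate (m + 1) 1)
      = zstar n (List.replicate (m + 1) 1)
        + (1 / ((n : ℝ) + 1)) * zstar (n + 1) (List.replicate m 1) := by
  rw [zstar_ones_succ, zstar_ones_succ, Finset.sum_Icc_succ_top (by omega)]
  push_cast
  rfl

/-- Generating function `Σ_m ζ*_n({1}_m) X^m`. -/
noncomputable def starSeries (n : ℕ) : PowerSeries ℝ :=
  PowerSeries.mk fun m => zstar n (List.replicate m 1)

/-- Generating function `Σ_k H_n^{(k+1)} X^k` of the power sums, shifted by one. -/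
noncomputable def powerSumSeries (n : ℕ) : PowerSeries ℝ :=
  PowerSeries.mk fun k => genH n (k + 1)

lemma one_sub_mul_starSeries (n : ℕ) :
    (1 - C (1 / ((n : ℝ) + 1)) * X) * starSeries (n + 1) = starSeries n := by
  ext m
  cases m with
  | zero => simp [sub_mul, mul_assoc, starSeries, zstar, zstarZ]
  | succ m =>
    rw [sub_mul, one_mul, mul_assoc, map_sub, coeff_C_mul, coeff_succ_X_mul]
    simp only [starSeries, coeff_mk]
    rw [zstar_ones_succ_succ]
    ring

lemma genH_succ (n k : ℕ) : genH (n + 1) k = genH n k + (1 / ((n : ℝ) + 1)) ^ k := by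
  unfold genH
  rw [Finset.sum_Icc_succ_top (by omega)]
  push_cast
  simp

lemma one_sub_mul_powerSumSeries (n : ℕ) :
    (1 - C (1 / ((n : ℝ) + 1)) * X) * (powerSumSeries (n + 1) - powerSumSeries n)
      = C (1 / ((n : ℝ) + 1)) := by
  ext m
  cases m with
  | zero =>
    rw [sub_mul, one_mul, mul_assoc, map_sub, coeff_C_mul, coeff_zero_X_mul]
    simp [powerSumSeries, genH_succ]
  | succ m =>
    rw [sub_mul, one_mul, mul_assoc, map_sub, coeff_C_mul, coeff_succ_X_mul,
      coeff_C, if_neg (by omega)]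
    simp only [powerSumSeries, map_sub, coeff_mk, genH_succ]
    ring

/-- The logarithmic derivative of `∏_{j ≤ n} 1 / (1 - X/j)`. -/
lemma derivative_starSeries (n : ℕ) :
    derivative ℝ (starSeries n) = powerSumSeries n * starSeries n := by
  induction n with
  | zero =>
    have hE : starSeries 0 = 1 := by
      ext m
      cases m with
      | zero => simp [starSeries, zstar, zstarZ]
      | succ m =>
        rw [starSeries, coeff_mk, zstar_ones_succ, coeff_one]
        simp
    have hP : powerSumSeries 0 = 0 := by
      ext m
      simp [powerSumSeries, genH]
    simp [hE, hP]
  | succ n ih =>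
    have hE := one_sub_mul_starSeries n
    have hP := one_sub_mul_powerSumSeries n
    set a : PowerSeries ℝ := C (1 / ((n : ℝ) + 1)) with ha
    have hne : (1 - a * X : PowerSeries ℝ) ≠ 0 := by
      intro h
      have := congrArg (coeff 0) h
      simp at this
    have hda : derivative ℝ (1 - a * X) = -a := by
      simp [ha, Derivation.leibniz]
    have hd : (1 - a * X) * derivative ℝ (starSeries (n + 1)) - a * starSeries (n + 1)
        = powerSumSeries n * ((1 - a * X) * starSeries (n + 1)) := by
      rw [hE, ← ih, ← hE, Derivation.leibniz, hda, smul_eq_mul, smul_eq_mul]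
      ring
    apply mul_left_cancel₀ hne
    linear_combination hd - starSeries (n + 1) * hP

/-- Newton's identities, as the coefficients of `E_n' = P_n E_n`. -/
lemma newton_zstar_ones (n m : ℕ) :
    ((m : ℝ) + 1) * zstar n (List.replicate (m + 1) 1)
      = ∑ j ∈ Finset.range (m + 1), genH n (m + 1 - j) * zstar n (List.replicate j 1) := by
  have h := congrArg (coeff m) (derivative_starSeries n)
  rw [coeff_derivative, mul_comm (powerSumSeries n), coeff_mul,
    Finset.Nat.sum_antidiagonal_eq_sum_range_succ_mk] at h
  simp only [starSeries, powerSumSeries, coeff_mk] at h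
  rw [mul_comm, h]
  refine Finset.sum_congr rfl fun j hj => ?_
  rw [Finset.mem_range] at hj
  rw [mul_comm, show m - j + 1 = m + 1 - j by omega]

lemma bellNum_eq (n m : ℕ) :
    bellNum m n = (m.factorial : ℝ) * zstar n (List.replicate m 1) := by
  induction m using Nat.strong_induction_on with
  | _ m ih =>
  cases m with
  | zero => simp [bellNum, bellY, zstar, zstarZ]
  | succ m =>
    have h := newton_zstar_ones n m
    rw [bellNum, bellY, Finset.sum_attach (Finset.range (m + 1)) (fun j =>
      (Nat.choose m j : ℝ) * (((m + 1 - j - 1).factorial : ℝ) * genH n (m + 1 - j))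
        * bellY (fun i => (Nat.factorial (i - 1) : ℝ) * genH n i) j),
      Nat.factorial_succ]
    push_cast
    rw [mul_comm ((m : ℝ) + 1), mul_assoc, h, Finset.mul_sum]
    refine Finset.sum_congr rfl fun j hj => ?_
    rw [Finset.mem_range] at hj
    have hb := ih j hj
    rw [bellNum] at hb
    have hc : (Nat.choose m j : ℝ) * j.factorial * (m - j).factorial = m.factorial := by
      exact_mod_cast Nat.choose_mul_factorial_mul_factorial (by omega : j ≤ m)
    rw [hb, show m + 1 - j - 1 = m - j by omega, ← hc]
    ring

/-- `ζ*_n({1}_m) = Y_m(n)/m!`. -/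
theorem zstar_ones_eq_bell (n m : ℕ) :
    zstar n (List.replicate m 1) = bellNum m n / (Nat.factorial m : ℝ) := by
  rw [bellNum_eq, mul_div_cancel_left₀]
  exact_mod_cast m.factorial_ne_zero
end

section
/- For every positive integer n and every integer p ≥ 0, ∫_0^1 t^{n−1} log^p(1−t) dt = (−1)^p p! ζ*_n({1}_p)/n. -/
/-!
Put `L t = log (1 - t)` and `A n p = n * ∫₀¹ t ^ (n - 1) * L t ^ p`, so that the claim reads
`A n p = (-1) ^ p * p! * ζ*_n({1}_p)`. On `(0, 1)` the function `(t ^ (n + 1) - t ^ n) * L t ^ (p + 1)`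
has derivative
`((n + 1) * t ^ n - n * t ^ (n - 1)) * L t ^ (p + 1) + (p + 1) * t ^ n * L t ^ p`,
because the factor `t - 1` cancels the denominator of the derivative of `L`. The function itself tends
to `0` at both endpoints, whence
`A (n + 1) (p + 1) = A n (p + 1) - (p + 1) / (n + 1) * A (n + 1) p`
(`succ_mul_integral_pow_mul_log_pow`). Up to the factor `(-1) ^ p * p!` this is the recursion for
`ζ*_n({1}_p)` in `zstar_succ_replicate_succ`, so a double induction on `p` and `n` concludes.
The analytic input, integrability and the boundary limit, comes from the bound
`|log x| ^ p ≤ (p + 1) ^ p * x ^ (-p / (p + 1))` on `(0, 1]`.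
-/

open scoped BigOperators

open Filter Topology Set MeasureTheory

/-- The exponent `-p / (p + 1)` exceeds `-1`, so the bound is integrable near `0`, and its product
with `x` tends to `0` there. -/
lemma abs_log_pow_le (p : ℕ) {x : ℝ} (hx : 0 < x) (hx1 : x ≤ 1) :
    |Real.log x ^ p| ≤ ((p : ℝ) + 1) ^ p * x ^ (-(p : ℝ) / (p + 1)) := by
  have hp : (0 : ℝ) < 1 / ((p : ℝ) + 1) := by positivity
  have h := (Real.abs_log_mul_self_rpow_lt x _ hx hx1 hp).le
  rw [one_div_one_div, abs_mul, abs_of_pos (Real.rpow_pos_of_pos hx _)] at h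
  have h2 := pow_le_pow_left₀ (by positivity) h p
  rw [mul_pow, ← Real.rpow_mul_natCast hx.le] at h2
  have h3 : x ^ (-(p : ℝ) / (p + 1)) = (x ^ (1 / ((p : ℝ) + 1) * p))⁻¹ := by
    rw [← Real.rpow_neg hx.le]
    congr 1
    ring
  rw [abs_pow, h3, ← div_eq_mul_inv, le_div_iff₀ (by positivity)]
  exact h2

lemma neg_one_lt_neg_div_add_one (p : ℕ) : (-1 : ℝ) < -(p : ℝ) / (p + 1) := by
  rw [lt_div_iff₀ (by positivity)]
  linarith

lemma intervalIntegrable_log_pow (p : ℕ) :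
    IntervalIntegrable (fun x : ℝ => Real.log x ^ p) volume 0 1 := by
  have h := (intervalIntegral.intervalIntegrable_rpow' (a := 0) (b := 1)
    (neg_one_lt_neg_div_add_one p)).const_mul (((p : ℝ) + 1) ^ p)
  refine h.mono_fun (Real.measurable_log.pow_const p).aestronglyMeasurable ?_
  filter_upwards [ae_restrict_mem measurableSet_uIoc] with x hx
  rw [uIoc_of_le zero_le_one] at hx
  exact (abs_log_pow_le p hx.1 hx.2).trans (le_abs_self _)

lemma intervalIntegrable_pow_mul_log_pow (n p : ℕ) :
    IntervalIntegrable (fun t : ℝ => t ^ n * Real.log (1 - t) ^ p) volume 0 1 := by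
  have h : IntervalIntegrable (fun t : ℝ => Real.log (1 - t) ^ p) volume 0 1 := by
    simpa using ((intervalIntegrable_log_pow p).comp_sub_left 1).symm
  exact h.continuousOn_mul (by fun_prop)

lemma tendsto_mul_log_pow (p : ℕ) :
    Tendsto (fun x : ℝ => x * Real.log x ^ p) (𝓝[>] 0) (𝓝 0) := by
  have hs : (0 : ℝ) < 1 + -(p : ℝ) / (p + 1) := by linarith [neg_one_lt_neg_div_add_one p]
  have h0 : Tendsto (fun x : ℝ => ((p : ℝ) + 1) ^ p * x ^ (1 + -(p : ℝ) / (p + 1)))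
      (𝓝[>] 0) (𝓝 0) := by
    have h1 : Tendsto (fun x : ℝ => x ^ (1 + -(p : ℝ) / (p + 1))) (𝓝 0) (𝓝 0) := by
      simpa [Real.zero_rpow hs.ne'] using (Real.continuousAt_rpow_const 0 _ (Or.inr hs.le)).tendsto
    simpa using (h1.mono_left nhdsWithin_le_nhds).const_mul (((p : ℝ) + 1) ^ p)
  refine squeeze_zero_norm' ?_ h0
  filter_upwards [Ioc_mem_nhdsGT (zero_lt_one' ℝ)] with x hx
  rw [Real.norm_eq_abs, abs_mul, abs_of_pos hx.1, Real.rpow_add hx.1, Real.rpow_one,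
    mul_left_comm]
  exact mul_le_mul_of_nonneg_left (abs_log_pow_le p hx.1 hx.2) hx.1.le

/-- Integration by parts in the exponent `n`. For `n = 0` the truncated exponent `n - 1` is harmless,
since its term carries the factor `n`. -/
lemma succ_mul_integral_pow_mul_log_pow (n p : ℕ) :
    ((n : ℝ) + 1) * ∫ t in (0:ℝ)..1, t ^ n * Real.log (1 - t) ^ (p + 1) =
      n * (∫ t in (0:ℝ)..1, t ^ (n - 1) * Real.log (1 - t) ^ (p + 1)) -
        ((p : ℝ) + 1) * ∫ t in (0:ℝ)..1, t ^ n * Real.log (1 - t) ^ p := by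
  have i1 := (intervalIntegrable_pow_mul_log_pow n (p + 1)).const_mul ((n : ℝ) + 1)
  have i2 := (intervalIntegrable_pow_mul_log_pow (n - 1) (p + 1)).const_mul (n : ℝ)
  have i3 := (intervalIntegrable_pow_mul_log_pow n p).const_mul ((p : ℝ) + 1)
  have hderiv : ∀ t ∈ Ioo (0 : ℝ) 1,
      HasDerivAt (fun t : ℝ => (t ^ (n + 1) - t ^ n) * Real.log (1 - t) ^ (p + 1))
        (((n : ℝ) + 1) * (t ^ n * Real.log (1 - t) ^ (p + 1)) -
          n * (t ^ (n - 1) * Real.log (1 - t) ^ (p + 1)) +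
          ((p : ℝ) + 1) * (t ^ n * Real.log (1 - t) ^ p)) t := by
    intro t ht
    have hne : 1 - t ≠ 0 := by linarith [ht.2]
    have hlog := (((hasDerivAt_id t).const_sub 1).log hne).pow (p + 1)
    refine (((hasDerivAt_pow (n + 1) t).sub (hasDerivAt_pow n t)).mul hlog).congr_deriv ?_
    simp only [id, Nat.add_sub_cancel, Pi.sub_apply, Pi.pow_apply]
    push_cast
    field_simp
    ring
  have hzero : Tendsto (fun t : ℝ => (t ^ (n + 1) - t ^ n) * Real.log (1 - t) ^ (p + 1))
      (𝓝[>] 0) (𝓝 0) := by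
    have hc : ContinuousAt
        (fun t : ℝ => (t ^ (n + 1) - t ^ n) * Real.log (1 - t) ^ (p + 1)) 0 := by
      have : (1 : ℝ) - 0 ≠ 0 := by norm_num
      fun_prop (disch := assumption)
    simpa using hc.tendsto.mono_left nhdsWithin_le_nhds
  have hone : Tendsto (fun t : ℝ => (t ^ (n + 1) - t ^ n) * Real.log (1 - t) ^ (p + 1))
      (𝓝[<] 1) (𝓝 0) := by
    have hsub : Tendsto (fun t : ℝ => 1 - t) (𝓝[<] 1) (𝓝[>] 0) := by
      refine tendsto_nhdsWithin_iff.2 ⟨?_, ?_⟩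
      · have : ContinuousAt (fun t : ℝ => 1 - t) 1 := by fun_prop
        simpa using this.tendsto.mono_left nhdsWithin_le_nhds
      · filter_upwards [self_mem_nhdsWithin] with t ht
        simpa using ht
    have hpow : Tendsto (fun t : ℝ => -t ^ n) (𝓝[<] 1) (𝓝 (-1 ^ n)) :=
      (by fun_prop : ContinuousAt (fun t : ℝ => -t ^ n) 1).tendsto.mono_left nhdsWithin_le_nhds
    have h := hpow.mul ((tendsto_mul_log_pow (p + 1)).comp hsub)
    rw [mul_zero] at h
    refine h.congr fun t => ?_
    simp only [Function.comp_apply]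
    ring
  have key := intervalIntegral.integral_eq_sub_of_hasDerivAt_of_tendsto zero_lt_one hderiv
    ((i1.sub i2).add i3) hzero hone
  rw [intervalIntegral.integral_add (i1.sub i2) i3, intervalIntegral.integral_sub i1 i2] at key
  simp only [intervalIntegral.integral_const_mul] at key
  linarith

/-- The singleton case has its own clause in the definition of `zstarZ`, and agrees with the general
recursion at `z = 1`. -/
lemma zstar_replicate_succ (n p : ℕ) :
    zstar n (List.replicate (p + 1) 1) =
      ∑ m ∈ Finset.Icc 1 n, 1 / (m : ℝ) * zstar m (List.replicate p 1) := by
  cases p with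
  | zero => simp [zstar, zstarZ]
  | succ p => simp [zstar, List.replicate_succ, zstarZ]

lemma zstar_succ_replicate_succ (n p : ℕ) :
    zstar (n + 1) (List.replicate (p + 1) 1) =
      zstar n (List.replicate (p + 1) 1) +
        1 / ((n : ℝ) + 1) * zstar (n + 1) (List.replicate p 1) := by
  rw [zstar_replicate_succ, zstar_replicate_succ, Finset.sum_Icc_succ_top (by omega)]
  push_cast
  rfl

/-- With the denominator `n` cleared, the induction on `n` for `0 < p` starts at `n = 0`, where both
sides vanish. The case `p = 0` needs `n` positive, hence the disjunction. -/
lemma mul_integral_pow_mul_log_pow (p : ℕ) : ∀ n : ℕ, 0 < n ∨ 0 < p →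
    (n : ℝ) * (∫ t in (0:ℝ)..1, t ^ (n - 1) * Real.log (1 - t) ^ p) =
      (-1 : ℝ) ^ p * (Nat.factorial p : ℝ) * zstar n (List.replicate p 1) := by
  induction p with
  | zero =>
    intro n hn
    obtain ⟨n, rfl⟩ := Nat.exists_eq_succ_of_ne_zero (show n ≠ 0 by omega)
    have : (n : ℝ) + 1 ≠ 0 := by positivity
    simp [zstar, zstarZ, this]
  | succ p ihp =>
    intro n _
    induction n with
    | zero => simp [zstar_replicate_succ]
    | succ n ihn =>
      have h := ihp (n + 1) (by omega)
      have hn := ihn (by omega)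
      have hne : (n : ℝ) + 1 ≠ 0 := by positivity
      rw [Nat.add_sub_cancel] at h ⊢
      push_cast at h ⊢
      rw [mul_comm, ← eq_div_iff hne] at h
      rw [succ_mul_integral_pow_mul_log_pow, zstar_succ_replicate_succ, hn, h,
        Nat.factorial_succ]
      push_cast
      ring

/-- Lemma 3.1: `∫_0^1 t^{n-1} log^p(1-t) dt = (-1)^p p! ζ*_n({1}_p)/n`. -/
theorem integral_pow_mul_log_pow (n p : ℕ) (hn : 0 < n) :
    ∫ t in (0:ℝ)..1, t ^ (n - 1) * (Real.log (1 - t)) ^ p =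
      (-1 : ℝ) ^ p * (Nat.factorial p : ℝ) * zstar n (List.replicate p 1) / n := by
  rw [← mul_integral_pow_mul_log_pow p n (Or.inl hn)]
  have : (n : ℝ) ≠ 0 := by positivity
  field_simp
end

section
/- Let a ≠ 0 and z > 0 be real numbers and m, j positive integers. Then the m-fold iterated integral ∫_{z > t_1 > t_2 > ... > t_m > 0} ((a t_m + 1)^j − 1)/(t_1 t_2 ··· t_m) dt_m ··· dt_1 = Σ_{j ≥ j_1 ≥ j_2 ≥ ... ≥ j_m ≥ 1} ((az+1)^{j_m} − 1)/(j_1 j_2 ··· j_m). -/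
/-!
Away from `t = 0`, the geometric sum gives `((a t + 1)^j - 1) / t = ∑_{k=1}^j a (a t + 1)^(k-1)`,
whose integral over `[0, z]` is `∑_{k=1}^j ((a z + 1)^k - 1) / k`. One integration against `dt / t`
thus replaces the function of exponent `j` by the sum over `k ≤ j` of the functions of exponent `k`,
each divided by `k`. By linearity, `m` integrations produce the recursively defined sum `chainSum`
(`integral_chainSum_div`, `iterInt_eq_chainSum`). Splitting off the largest entry of a weakly
decreasing tuple identifies `chainSum` with the sum over `decT` (`sum_decT_eq_chainSum`).
-/

open scoped BigOperators

/-- The chain sum over `j ≥ j₁ ≥ ⋯ ≥ j_m ≥ 1` of `G j_m / (j₁ ⋯ j_m)`, built by peeling off the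
largest index `j₁` first; for the empty chain the value is `G j`. -/
noncomputable def chainSum (G : ℕ → ℝ) : ℕ → ℕ → ℝ
  | 0, j => G j
  | m + 1, j => ∑ k ∈ Finset.Icc 1 j, chainSum G m k / k

lemma cons_mem_decT {j m k : ℕ} {g : Fin m → ℕ} :
    (Fin.cons k g : Fin (m + 1) → ℕ) ∈ decT j (m + 1) ↔ k ∈ Finset.Icc 1 j ∧ g ∈ decT k m := by
  simp only [decT, Finset.mem_filter, Fintype.mem_piFinset, Finset.mem_Icc, Fin.forall_fin_succ,
    Fin.cons_zero, Fin.cons_succ, Fin.succ_le_succ_iff, Fin.zero_le, le_refl, forall_true_left,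
    true_and]
  constructor
  · rintro ⟨-, ⟨hk, hg⟩, hkg, hmono⟩
    exact ⟨hk, fun i => ⟨(hg i).1, hkg i⟩, fun i => ⟨(hg i).1, hkg i⟩, fun i => (hmono i).2⟩
  · rintro ⟨hk, hg, -, hmono⟩
    have hb : ∀ i, 1 ≤ g i ∧ g i ≤ j := fun i => ⟨(hg i).1, (hg i).2.trans hk.2⟩
    refine ⟨⟨hk, hb⟩, ⟨hk, hb⟩, fun i => (hg i).2, fun i => ⟨fun h => ?_, hmono i⟩⟩
    exact absurd h (not_le.mpr (Fin.succ_pos i))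

lemma sum_decT_succ (j m : ℕ) (F : (Fin (m + 1) → ℕ) → ℝ) :
    ∑ f ∈ decT j (m + 1), F f =
      ∑ k ∈ Finset.Icc 1 j, ∑ g ∈ decT k m, F (Fin.cons k g) := by
  rw [Finset.sum_sigma']
  refine Finset.sum_bij' (fun f _ => (⟨f 0, Fin.tail f⟩ : (_ : ℕ) × (Fin m → ℕ)))
    (fun p _ => Fin.cons p.1 p.2) ?_ ?_ ?_ ?_ ?_
  · intro f hf
    rw [← Fin.cons_self_tail f, cons_mem_decT] at hf
    exact Finset.mem_sigma.mpr hf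
  · intro p hp
    exact cons_mem_decT.mpr (Finset.mem_sigma.mp hp)
  · intro f _
    exact Fin.cons_self_tail f
  · rintro ⟨k, g⟩ _
    simp
  · intro f _
    simp

/-- Prepending the bound `j` to each chain gives the last index a meaning for the empty chain too,
so that the induction can start at `m = 0`. -/
lemma sum_decT_eq_chainSum (G : ℕ → ℝ) (m j : ℕ) :
    ∑ f ∈ decT j m, G ((Fin.cons j f : Fin (m + 1) → ℕ) (Fin.last m)) / ∏ i, (f i : ℝ) =
      chainSum G m j := by
  induction m generalizing j with
  | zero => simp [decT, chainSum]
  | succ m ih =>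
    rw [sum_decT_succ, chainSum]
    refine Finset.sum_congr rfl fun k _ => ?_
    rw [← ih k, Finset.sum_div]
    refine Finset.sum_congr rfl fun g _ => ?_
    rw [← Fin.succ_last, Fin.cons_succ, Fin.prod_univ_succ]
    simp only [Fin.cons_zero, Fin.cons_succ]
    rw [div_div, mul_comm]

/-- Away from `t = 0`, the geometric sum turns the integrand into a polynomial. -/
lemma pow_sub_one_div (a t : ℝ) (ht : t ≠ 0) (j : ℕ) :
    ((a * t + 1) ^ j - 1) / t = ∑ k ∈ Finset.Icc 1 j, a * (a * t + 1) ^ (k - 1) := by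
  induction j with
  | zero => simp
  | succ j ih =>
    rw [Finset.sum_Icc_succ_top (by omega), ← ih, Nat.add_sub_cancel]
    field_simp
    ring

lemma hasDerivAt_pow_div (a t : ℝ) {k : ℕ} (hk : k ≠ 0) :
    HasDerivAt (fun t : ℝ => (a * t + 1) ^ k / k) (a * (a * t + 1) ^ (k - 1)) t := by
  have h : HasDerivAt (fun t : ℝ => (a * t + 1) ^ k / k)
      (k * (a * t + 1) ^ (k - 1) * (a * 1) / k) t :=
    ((((hasDerivAt_id t).const_mul a).add_const 1).pow k).div_const (k : ℝ)
  have hk' : (k : ℝ) ≠ 0 := Nat.cast_ne_zero.mpr hk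
  refine h.congr_deriv ?_
  field_simp

/-- Dividing a chain sum by `t` and integrating lengthens the chains by one; integrability is
carried along because linearity of the integral needs it. -/
lemma integral_chainSum_div (a z : ℝ) (m j : ℕ) :
    IntervalIntegrable (fun t => chainSum (fun k => (a * t + 1) ^ k - 1) m j / t)
        MeasureTheory.volume 0 z ∧
      ∫ t in (0:ℝ)..z, chainSum (fun k => (a * t + 1) ^ k - 1) m j / t =
        chainSum (fun k => (a * z + 1) ^ k - 1) (m + 1) j := by
  induction m generalizing j with
  | zero =>
    have hae : ∀ᵐ t ∂(MeasureTheory.volume : MeasureTheory.Measure ℝ),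
        ((a * t + 1) ^ j - 1) / t = ∑ k ∈ Finset.Icc 1 j, a * (a * t + 1) ^ (k - 1) := by
      filter_upwards [MeasureTheory.Measure.ae_ne MeasureTheory.volume (0 : ℝ)] with t ht
      exact pow_sub_one_div a t ht j
    have h_integrable : ∀ k : ℕ, IntervalIntegrable (fun t : ℝ => a * (a * t + 1) ^ (k - 1))
        MeasureTheory.volume 0 z := fun k => Continuous.intervalIntegrable (by fun_prop) _ _
    simp only [chainSum]
    constructor
    · have hc : IntervalIntegrable
          (fun t : ℝ => ∑ k ∈ Finset.Icc 1 j, a * (a * t + 1) ^ (k - 1))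
          MeasureTheory.volume 0 z := Continuous.intervalIntegrable (by fun_prop) _ _
      refine hc.congr_ae (MeasureTheory.ae_restrict_of_ae ?_)
      filter_upwards [hae] with t ht using ht.symm
    · rw [intervalIntegral.integral_congr_ae (hae.mono fun t ht _ => ht),
        intervalIntegral.integral_finsetSum fun k _ => h_integrable k]
      refine Finset.sum_congr rfl fun k hk => ?_
      have hk0 : k ≠ 0 := by have := (Finset.mem_Icc.mp hk).1; omega
      rw [intervalIntegral.integral_eq_sub_of_hasDerivAt
        (fun t _ => hasDerivAt_pow_div a t hk0) (h_integrable k)]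
      simp [sub_div]
  | succ m ih =>
    have hswap : ∀ t : ℝ, chainSum (fun k => (a * t + 1) ^ k - 1) (m + 1) j / t =
        ∑ k ∈ Finset.Icc 1 j, chainSum (fun k => (a * t + 1) ^ k - 1) m k / t / k := fun t => by
      rw [chainSum, Finset.sum_div]
      exact Finset.sum_congr rfl fun k _ => div_right_comm _ _ _
    have h_integrable : ∀ k : ℕ, IntervalIntegrable
        (fun t => chainSum (fun k => (a * t + 1) ^ k - 1) m k / t / k)
        MeasureTheory.volume 0 z := fun k => (ih k).1.div_const _
    simp only [hswap]
    constructor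
    · simpa only [Finset.sum_fn] using
        IntervalIntegrable.sum (Finset.Icc 1 j) fun k _ => h_integrable k
    · rw [intervalIntegral.integral_finsetSum fun k _ => h_integrable k, chainSum]
      refine Finset.sum_congr rfl fun k _ => ?_
      rw [intervalIntegral.integral_div, (ih k).2]

lemma iterInt_eq_chainSum (a z : ℝ) (m j : ℕ) :
    iterInt (fun t => (a * t + 1) ^ j - 1) m z =
      chainSum (fun k => (a * z + 1) ^ k - 1) m j := by
  induction m generalizing z with
  | zero => rfl
  | succ m ih =>
    simp only [iterInt, ih]
    exact (integral_chainSum_div a z m j).2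

/-- equation (3.8): the `m`-fold iterated integral of
`((a t_m + 1)^j - 1)/(t_1 ⋯ t_m)` as a sum over weakly decreasing chains. -/
theorem iterInt_eq_chain_sum (a z : ℝ) (ha : a ≠ 0) (hz : 0 < z)
    (m j : ℕ) (hm : 0 < m) (hj : 0 < j) :
    iterInt (fun t => (a * t + 1) ^ j - 1) m z =
      ∑ f ∈ decT j m,
        ((a * z + 1) ^ (f ⟨m - 1, by omega⟩) - 1) / ∏ i, (f i : ℝ) := by
  rw [iterInt_eq_chainSum, ← sum_decT_eq_chainSum]
  obtain ⟨m, rfl⟩ := Nat.exists_eq_succ_of_ne_zero hm.ne'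
  refine Finset.sum_congr rfl fun f _ => ?_
  rw [← Fin.succ_last, Fin.cons_succ]
  rfl
end

section
/- Let x, y be real numbers with x/(x+y) ≥ 0 and let n be a positive integer. Then Σ_{k=0}^n x^k y^{n−k} C(n,k) H̄_k^{(2)} = Σ_{n ≥ j ≥ l ≥ 1} (1/(jl)) (x+y)^{n−j} y^{j−l} (y^l − (y−x)^l), where H̄_k^{(2)} = Σ_{j=1}^k (−1)^{j−1}/j^2 is the k-th alternating harmonic number of order 2 (H̄_0^{(2)} = 0). -/
/-!
Both sides satisfy the same first-order recurrence in `n`, so the identity follows by induction.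
Write `S n a = ∑ k ≤ n, C(n,k) x^k y^(n-k) a k`.

* Pascal's rule gives `S (n+1) a = y * S n a + x * S n (k ↦ a (k+1))` (`binomSum_succ`).
* The absorption rule `C(n,k)/(k+1) = C(n+1,k+1)/(n+1)` gives
  `x * S n (k ↦ b (k+1) / (k+1)) = (S (n+1) b - y^(n+1) * b 0) / (n+1)` (`binomSum_absorb`).

For the alternating harmonic numbers, the increments `(-1)^k/(k+1)^2` have the absorbed form with
`b k = (-1)^(k-1)/k`, so `S (n+1) H̄ = (x+y) * S n H̄ + S (n+1) b / (n+1)`. In turn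
`b (k+1) = (-1)^k/(k+1)` is itself of absorbed form, and the binomial theorem yields
`S (n+1) b = y * S n b + (y^(n+1) - (y-x)^(n+1)) / (n+1)`. Solving the second recurrence gives the
inner sum over `l`, and then the first one gives the outer sum over `j`. All of this is polynomial
in `x` and `y`.
-/

open scoped BigOperators

/-- The binomial transform `∑ k ≤ n, C(n,k) x^k y^(n-k) a k` of a sequence `a`. -/
noncomputable def binomSum (x y : ℝ) (n : ℕ) (a : ℕ → ℝ) : ℝ :=
  ∑ k ∈ Finset.range (n + 1), x ^ k * y ^ (n - k) * (n.choose k : ℝ) * a k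

theorem binomSum_succ (x y : ℝ) (n : ℕ) (a : ℕ → ℝ) :
    binomSum x y (n + 1) a
      = y * binomSum x y n a + x * binomSum x y n (fun k => a (k + 1)) := by
  have h := Finset.sum_choose_succ_mul (fun i j => x ^ i * y ^ j * a i) n
  unfold binomSum
  rw [Finset.mul_sum, Finset.mul_sum]
  calc _ = ∑ i ∈ Finset.range (n + 2),
        ((n + 1).choose i : ℝ) * (x ^ i * y ^ (n + 1 - i) * a i) :=
        Finset.sum_congr rfl fun i _ => by ring
    _ = _ := by
      rw [h]
      congr 1
      · refine Finset.sum_congr rfl fun i hi => ?_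
        have hi' : n + 1 - i = (n - i) + 1 := by
          have := Finset.mem_range.mp hi
          omega
        rw [hi']
        ring
      · exact Finset.sum_congr rfl fun i _ => by ring

theorem binomSum_add (x y : ℝ) (n : ℕ) (a b : ℕ → ℝ) :
    binomSum x y n (fun k => a k + b k) = binomSum x y n a + binomSum x y n b := by
  simp only [binomSum, mul_add, Finset.sum_add_distrib]

theorem binomSum_absorb (x y : ℝ) (n : ℕ) (b : ℕ → ℝ) :
    x * binomSum x y n (fun k => b (k + 1) / ((k : ℝ) + 1))
      = (binomSum x y (n + 1) b - y ^ (n + 1) * b 0) / ((n : ℝ) + 1) := by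
  unfold binomSum
  rw [Finset.sum_range_succ' _ (n + 1)]
  simp only [pow_zero, Nat.sub_zero, Nat.choose_zero_right, Nat.cast_one, one_mul, mul_one,
    add_sub_cancel_right]
  rw [Finset.mul_sum, Finset.sum_div]
  refine Finset.sum_congr rfl fun k _ => ?_
  have h : ((n : ℝ) + 1) * (n.choose k : ℝ) = ((n + 1).choose (k + 1) : ℝ) * ((k : ℝ) + 1) := by
    exact_mod_cast Nat.add_one_mul_choose_eq n k
  have hn : (n : ℝ) + 1 ≠ 0 := by positivity
  have hk : (k : ℝ) + 1 ≠ 0 := by positivity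
  rw [Nat.add_sub_add_right]
  field_simp
  linear_combination (x * x ^ k * y ^ (n - k) * b (k + 1)) * h

/-- The binomial theorem for `(y - x)^n`. -/
theorem binomSum_neg_one_pow (x y : ℝ) (n : ℕ) :
    binomSum x y n (fun k => -(-1) ^ k) = -(y - x) ^ n := by
  have h := add_pow (-x) y n
  rw [show y - x = -x + y by ring, h, binomSum, ← Finset.sum_neg_distrib]
  refine Finset.sum_congr rfl fun k _ => ?_
  rw [neg_pow x k]
  ring

theorem binomSum_alt_inv (x y : ℝ) (n : ℕ) :
    binomSum x y n (fun k => (-1) ^ (k - 1) / (k : ℝ))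
      = ∑ l ∈ Finset.Icc 1 n, 1 / (l : ℝ) * y ^ (n - l) * (y ^ l - (y - x) ^ l) := by
  induction n with
  -- The `k = 0` term vanishes because `1 / 0 = 0`.
  | zero => simp [binomSum]
  | succ n ih =>
    have h := binomSum_absorb x y n (fun k => -(-1) ^ k)
    rw [binomSum_neg_one_pow] at h
    have e : (fun k : ℕ => (-1 : ℝ) ^ (k + 1 - 1) / ((k + 1 : ℕ) : ℝ))
        = fun k : ℕ => -(-1) ^ (k + 1) / ((k : ℝ) + 1) := by
      funext k
      rw [Nat.add_sub_cancel]
      push_cast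
      ring
    rw [binomSum_succ, ih, e, h, Finset.sum_Icc_succ_top (by omega), Finset.mul_sum]
    congr 1
    · refine Finset.sum_congr rfl fun l hl => ?_
      rw [Nat.sub_add_comm (Finset.mem_Icc.mp hl).2]
      ring
    · simp only [Nat.sub_self]
      push_cast
      ring

theorem binomSum_alt_harmonic (x y : ℝ) (n : ℕ) :
    binomSum x y n (fun k => ∑ j ∈ Finset.Icc 1 k, (-1 : ℝ) ^ (j - 1) / (j : ℝ) ^ 2) =
      ∑ j ∈ Finset.Icc 1 n, ∑ l ∈ Finset.Icc 1 j,
        (1 / ((j : ℝ) * (l : ℝ))) * (x + y) ^ (n - j) * y ^ (j - l) *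
          (y ^ l - (y - x) ^ l) := by
  induction n with
  | zero => simp [binomSum]
  | succ n ih =>
    have h := binomSum_absorb x y n (fun k => (-1) ^ (k - 1) / (k : ℝ))
    rw [binomSum_alt_inv] at h
    have e : (fun k : ℕ => ∑ j ∈ Finset.Icc 1 (k + 1), (-1 : ℝ) ^ (j - 1) / (j : ℝ) ^ 2)
        = fun k : ℕ => (∑ j ∈ Finset.Icc 1 k, (-1 : ℝ) ^ (j - 1) / (j : ℝ) ^ 2)
          + (-1) ^ (k + 1 - 1) / ((k + 1 : ℕ) : ℝ) / ((k : ℝ) + 1) := by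
      funext k
      rw [Finset.sum_Icc_succ_top (by omega), div_div, sq]
      push_cast
      rfl
    rw [binomSum_succ, e, binomSum_add, mul_add, h, ← add_assoc, ← add_mul, ih,
      Finset.sum_Icc_succ_top (by omega) (fun j => ∑ l ∈ Finset.Icc 1 j, _), Finset.mul_sum]
    congr 1
    · refine Finset.sum_congr rfl fun j hj => ?_
      rw [Finset.mul_sum]
      refine Finset.sum_congr rfl fun l _ => ?_
      rw [Nat.sub_add_comm (Finset.mem_Icc.mp hj).2]
      ring
    -- `b 0 = 0` for `b k = (-1)^(k-1)/k`, since `1 / 0 = 0`: `h` has no boundary term.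
    · simp only [Nat.cast_zero, div_zero, mul_zero, sub_zero, Nat.sub_self]
      rw [Finset.sum_div]
      refine Finset.sum_congr rfl fun l _ => ?_
      push_cast
      rw [one_div ((_ : ℝ) * _), mul_inv]
      ring

/-- Mneimneh-type binomial sum of the alternating harmonic
numbers of order 2. -/
theorem mneimneh_type_alt_harmonic (x y : ℝ) (hx : 0 ≤ x / (x + y)) (n : ℕ) (hn : 0 < n) :
    ∑ k ∈ Finset.range (n + 1),
        x ^ k * y ^ (n - k) * (n.choose k : ℝ) *
          (∑ j ∈ Finset.Icc 1 k, (-1 : ℝ) ^ (j - 1) / (j : ℝ) ^ 2) =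
      ∑ j ∈ Finset.Icc 1 n, ∑ l ∈ Finset.Icc 1 j,
        (1 / ((j : ℝ) * (l : ℝ))) * (x + y) ^ (n - j) * y ^ (j - l) *
          (y ^ l - (y - x) ^ l) := by
  exact binomSum_alt_harmonic x y n
end
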